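/- Let f_j, g_i be convex polynomials, z₀ ∈ K, and suppose: (i) there exists x̂ with g_i(x̂) < 0 for all i and f_j(x̂) < f_j(z₀) for all j (Slater condition); (ii) Σ_j λ_j ∇²f_j(x̄) ≻ 0 where x̄ minimizes λᵀf over K_{z₀}. Then there exist sum-of-squares polynomials σ, σ₀, scalars μ̄_i ≥ 0, ν̄_j ≥ 0 such that λᵀf − f̄_{z₀} = σ₀ − Σ_i μ̄_i g_i − Σ_j ν̄_j (f_j − f_j(z₀)) − σ·(λᵀf − λᵀf(z₀)). -/

import Mathlib

/-- A real multivariate polynomial is a sum of squares. -/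
def IsSOS {n : ℕ} (q : MvPolynomial (Fin n) ℝ) : Prop :=
  ∃ (r : ℕ) (s : Fin r → MvPolynomial (Fin n) ℝ), q = ∑ l, (s l) ^ 2

/-- A preordering of a commutative ring (possibly improper). -/
structure PreOrd {B : Type} [CommRing B] (T : Set B) : Prop where
  add : ∀ {a b}, a ∈ T → b ∈ T → a + b ∈ T
  mul : ∀ {a b}, a ∈ T → b ∈ T → a * b ∈ T
  sq : ∀ a, a * a ∈ T

namespace PreOrd

variable {B : Type} [CommRing B] {T : Set B}

theorem zero (h : PreOrd T) : (0 : B) ∈ T := by simpa using h.sq 0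

theorem one (h : PreOrd T) : (1 : B) ∈ T := by simpa using h.sq 1

/-- Adjoining an element to a preordering. -/
theorem adjoin (h : PreOrd T) (a : B) : PreOrd {x | ∃ p ∈ T, ∃ q ∈ T, x = p + a * q} where
  add := by
    rintro _ _ ⟨p, hp, q, hq, rfl⟩ ⟨p', hp', q', hq', rfl⟩
    exact ⟨p + p', h.add hp hp', q + q', h.add hq hq', by ring⟩
  mul := by
    rintro _ _ ⟨p, hp, q, hq, rfl⟩ ⟨p', hp', q', hq', rfl⟩
    refine ⟨p * p' + (a * a) * (q * q'), h.add (h.mul hp hp') (h.mul (h.sq a) (h.mul hq hq')),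
      p * q' + q * p', h.add (h.mul hp hq') (h.mul hq hp'), by ring⟩
  sq := fun b => ⟨b * b, h.sq b, 0, h.zero, by ring⟩

theorem exists_max (h : PreOrd T) (h1 : (-1 : B) ∉ T) :
    ∃ P : Set B, T ⊆ P ∧ PreOrd P ∧ (-1 : B) ∉ P ∧
      ∀ Q : Set B, PreOrd Q → (-1 : B) ∉ Q → P ⊆ Q → Q = P := by
  obtain ⟨P, hTP, hP⟩ := zorn_subset_nonempty {P : Set B | PreOrd P ∧ (-1 : B) ∉ P} (by
    intro c hc hchain hne
    refine ⟨⋃₀ c, ⟨⟨?_, ?_, ?_⟩, ?_⟩, fun s hs => Set.subset_sUnion_of_mem hs⟩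
    · rintro a b ⟨s, hs, ha⟩ ⟨t, ht, hb⟩
      rcases hchain.total hs ht with hst | hst
      · exact ⟨t, ht, (hc ht).1.add (hst ha) hb⟩
      · exact ⟨s, hs, (hc hs).1.add ha (hst hb)⟩
    · rintro a b ⟨s, hs, ha⟩ ⟨t, ht, hb⟩
      rcases hchain.total hs ht with hst | hst
      · exact ⟨t, ht, (hc ht).1.mul (hst ha) hb⟩
      · exact ⟨s, hs, (hc hs).1.mul ha (hst hb)⟩
    · intro a
      obtain ⟨s, hs⟩ := hne
      exact ⟨s, hs, (hc hs).1.sq a⟩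
    · rintro ⟨s, hs, ha⟩
      exact (hc hs).2 ha) T ⟨h, h1⟩
  refine ⟨P, hTP, hP.prop.1, hP.prop.2, fun Q hQ hQ1 hPQ => ?_⟩
  exact Set.Subset.antisymm (hP.le_of_ge ⟨hQ, hQ1⟩ hPQ) hPQ

/-- Abstract Positivstellensatz: positivity at all orderings gives a certificate. -/
theorem abstract_pos (h : PreOrd T) (f : B)
    (H : ∀ (K : Type) [CommRing K] [LinearOrder K] [IsStrictOrderedRing K] (ρ : B →+* K),
      (∀ t ∈ T, 0 ≤ ρ t) → 0 < ρ f) :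
    ∃ s ∈ T, ∃ t ∈ T, s * f = 1 + t := by
  by_contra hcon
  push Not at hcon
  have h1 : (-1 : B) ∉ {x | ∃ p ∈ T, ∃ q ∈ T, x = p + (-f) * q} := by
    rintro ⟨p, hp, q, hq, e⟩
    exact hcon q hq p hp (by linear_combination e)
  obtain ⟨P, hTP, hP, hP1, hmax⟩ := (h.adjoin (-f)).exists_max h1
  have key : ∀ a, a ∉ P → ∃ p ∈ P, ∃ q ∈ P, -1 = p + a * q := by
    intro a ha
    by_contra hc
    have := hmax _ (hP.adjoin a) hc (fun p hp => ⟨p, hp, 0, hP.zero, by ring⟩)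
    apply ha
    rw [← this]
    exact ⟨0, hP.zero, 1, hP.one, by ring⟩
  have total : ∀ a, a ∈ P ∨ -a ∈ P := by
    intro a
    by_contra hc
    push Not at hc
    obtain ⟨p, hp, q, hq, e⟩ := key a hc.1
    obtain ⟨p', hp', q', hq', e'⟩ := key (-a) hc.2
    apply hP1
    have : (-1 : B) = p + p' + p * p' + (a * a) * (q * q') := by
      linear_combination (1 + p') * e - a * q * e'
    rw [this]
    exact hP.add (hP.add (hP.add hp hp') (hP.mul hp hp')) (hP.mul (hP.sq a) (hP.mul hq hq'))
  let I : Ideal B :=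
    { carrier := {a | a ∈ P ∧ -a ∈ P}
      add_mem' := by
        rintro a b ⟨ha, ha'⟩ ⟨hb, hb'⟩
        exact ⟨hP.add ha hb, by rw [neg_add]; exact hP.add ha' hb'⟩
      zero_mem' := ⟨hP.zero, by simpa using hP.zero⟩
      smul_mem' := by
        rintro c a ⟨ha, ha'⟩
        rw [smul_eq_mul]
        rcases total c with hc | hc
        · exact ⟨hP.mul hc ha, by simpa using hP.mul hc ha'⟩
        · exact ⟨by simpa using hP.mul hc ha', by simpa using hP.mul hc ha⟩ }
  have memI : ∀ a, a ∈ I ↔ a ∈ P ∧ -a ∈ P := fun a => Iff.rfl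
  have primeAux : ∀ a b, -a ∉ P → a * b ∈ I → b ∈ I := by
    intro a b ha hab
    obtain ⟨p, hp, q, hq, e⟩ := key _ ha
    have hb : b + b * p ∈ I := by
      have : b + b * p = q * (a * b) := by linear_combination (-b) * e
      rw [this]; exact I.mul_mem_left _ hab
    rcases total b with hbP | hbP
    · refine ⟨hbP, ?_⟩
      have : -b = b * p + -(b + b * p) := by ring
      rw [this]; exact hP.add (hP.mul hbP hp) hb.2
    · refine ⟨?_, hbP⟩
      have : b = (b + b * p) + (-b) * p := by ring
      rw [this]; exact hP.add hb.1 (hP.mul hbP hp)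
  have hprime : I.IsPrime := by
    refine ⟨?_, ?_⟩
    · intro hI
      have : (1 : B) ∈ I := by rw [hI]; trivial
      exact hP1 this.2
    · intro a b hab
      by_cases ha : -a ∈ P
      · by_cases ha' : a ∈ P
        · exact Or.inl ⟨ha', ha⟩
        · right
          refine primeAux (-a) b (by simpa using ha') ?_
          rw [neg_mul]; exact I.neg_mem hab
      · exact Or.inr (primeAux a b ha hab)
  let C : RingCone (B ⧸ I) :=
    { carrier := Ideal.Quotient.mk I '' P
      add_mem' := by
        rintro _ _ ⟨a, ha, rfl⟩ ⟨b, hb, rfl⟩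
        exact ⟨a + b, hP.add ha hb, map_add _ _ _⟩
      mul_mem' := by
        rintro _ _ ⟨a, ha, rfl⟩ ⟨b, hb, rfl⟩
        exact ⟨a * b, hP.mul ha hb, map_mul _ _ _⟩
      zero_mem' := ⟨0, hP.zero, map_zero _⟩
      one_mem' := ⟨1, hP.one, map_one _⟩
      eq_zero_of_mem_of_neg_mem' := by
        rintro _ ⟨a, ha, rfl⟩ ⟨b, hb, e⟩
        have hab : a + b ∈ I := by
          rw [← Ideal.Quotient.eq_zero_iff_mem, map_add, e]; ring
        rw [Ideal.Quotient.eq_zero_iff_mem]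
        refine ⟨ha, ?_⟩
        have : -a = b + -(a + b) := by ring
        rw [this]; exact hP.add hb hab.2 }
  have memC : ∀ x, x ∈ C ↔ ∃ a ∈ P, Ideal.Quotient.mk I a = x := fun x => Iff.rfl
  classical
  letI iP : PartialOrder (B ⧸ I) := .mkOfAddGroupCone C
  have le_def : ∀ x y : B ⧸ I, x ≤ y ↔ y - x ∈ C := fun x y => Iff.rfl
  letI iL : LinearOrder (B ⧸ I) :=
    { iP with
      le_total := by
        intro x y
        rw [le_def, le_def]
        obtain ⟨a, ha⟩ := Ideal.Quotient.mk_surjective (y - x)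
        rcases total a with h' | h'
        · exact Or.inl ⟨a, h', ha⟩
        · exact Or.inr ⟨-a, h', by rw [map_neg, ha]; ring⟩
      toDecidableLE := Classical.decRel _ }
  haveI : IsOrderedRing (B ⧸ I) := IsOrderedRing.mkOfCone C
  have := H (B ⧸ I) (Ideal.Quotient.mk I) (by
    intro t ht
    have : Ideal.Quotient.mk I t - 0 ∈ C := ⟨t, hTP ⟨t, ht, 0, h.zero, by ring⟩, by ring⟩
    exact this)
  have h2 : Ideal.Quotient.mk I f ≤ 0 := by
    have : 0 - Ideal.Quotient.mk I f ∈ C :=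
      ⟨-f, hTP ⟨0, h.zero, 1, h.one, by ring⟩, by rw [map_neg]; ring⟩
    exact this
  exact absurd this (not_lt.mpr h2)

end PreOrd


namespace PreOrd

variable {B : Type} [CommRing B] [Algebra ℝ B] {T : Set B}

theorem const (h : PreOrd T) {r : ℝ} (hr : 0 ≤ r) : algebraMap ℝ B r ∈ T := by
  have := h.sq (algebraMap ℝ B (Real.sqrt r))
  rwa [← map_mul, Real.mul_self_sqrt hr] at this

/-- Elements bounded with respect to a preordering. -/
def Bdd (T : Set B) (b : B) : Prop :=
  ∃ N : ℝ, 0 ≤ N ∧ algebraMap ℝ B N + b ∈ T ∧ algebraMap ℝ B N - b ∈ T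

theorem bdd_add (h : PreOrd T) {a b : B} (ha : Bdd T a) (hb : Bdd T b) : Bdd T (a + b) := by
  obtain ⟨N, hN, h1, h2⟩ := ha
  obtain ⟨M, hM, h3, h4⟩ := hb
  refine ⟨N + M, by positivity, ?_, ?_⟩
  · convert h.add h1 h3 using 1; rw [map_add]; ring
  · convert h.add h2 h4 using 1; rw [map_add]; ring

theorem bdd_mul (h : PreOrd T) {a b : B} (ha : Bdd T a) (hb : Bdd T b) : Bdd T (a * b) := by
  obtain ⟨N, hN, h1, h2⟩ := ha
  obtain ⟨M, hM, h3, h4⟩ := hb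
  have half : algebraMap ℝ B (1 / 2) * 2 = 1 := by
    rw [← map_ofNat (algebraMap ℝ B) 2, ← map_mul]; norm_num
  have hc := h.const (r := 1 / 2) (by norm_num)
  refine ⟨N * M, by positivity, ?_, ?_⟩
  · convert h.mul hc (h.add (h.mul h1 h3) (h.mul h2 h4)) using 1
    rw [map_mul]
    linear_combination
      (-(algebraMap ℝ B N * algebraMap ℝ B M) - a * b) * half
  · convert h.mul hc (h.add (h.mul h1 h4) (h.mul h2 h3)) using 1
    rw [map_mul]
    linear_combination
      (-(algebraMap ℝ B N * algebraMap ℝ B M) + a * b) * half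

theorem bdd_const (h : PreOrd T) (r : ℝ) : Bdd T (algebraMap ℝ B r) := by
  refine ⟨|r|, abs_nonneg r, ?_, ?_⟩
  · rw [← map_add]; exact h.const (by linarith [neg_abs_le r])
  · rw [← map_sub]; exact h.const (by linarith [le_abs_self r])

theorem bdd_of_adjoin (h : PreOrd T) {s : Set B} (hs : Algebra.adjoin ℝ s = ⊤)
    (hx : ∀ x ∈ s, Bdd T x) (b : B) : Bdd T b := by
  have hb : b ∈ Algebra.adjoin ℝ s := by rw [hs]; trivial
  induction hb using Algebra.adjoin_induction with
  | mem x hxs => exact hx x hxs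
  | algebraMap r => exact h.bdd_const r
  | add x y _ _ h1 h2 => exact h.bdd_add h1 h2
  | mul x y _ _ h1 h2 => exact h.bdd_mul h1 h2

theorem sum_mem (h : PreOrd T) {ι : Type*} (s : Finset ι) (u : ι → B) (hu : ∀ i ∈ s, u i ∈ T) :
    ∑ i ∈ s, u i ∈ T := by
  classical
  induction s using Finset.induction_on with
  | empty => simpa using h.zero
  | insert a s ha ih =>
    rw [Finset.sum_insert ha]
    exact h.add (hu a (by simp)) (ih fun i hi => hu i (by simp [hi]))

theorem bdd_gen (h : PreOrd T) {ι : Type*} [Fintype ι] (x : ι → B) (R : ℝ) (hR : 0 ≤ R)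
    (hm : algebraMap ℝ B R - ∑ i, x i * x i ∈ T) (i : ι) : Bdd T (x i) := by
  classical
  have half : algebraMap ℝ B (1 / 2) * 2 = 1 := by
    rw [← map_ofNat (algebraMap ℝ B) 2, ← map_mul]; norm_num
  have hc := h.const (r := 1 / 2) (by norm_num)
  have h1 : algebraMap ℝ B R - x i * x i ∈ T := by
    have h2 := h.sum_mem (Finset.univ.erase i) (fun j => x j * x j) (fun j _ => h.sq _)
    have h3 := Finset.add_sum_erase Finset.univ (fun j => x j * x j) (Finset.mem_univ i)
    convert h.add hm h2 using 1
    rw [← h3]; ring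
  have e : algebraMap ℝ B ((R + 1) / 2) = algebraMap ℝ B (1 / 2) * (algebraMap ℝ B R + 1) := by
    rw [← map_one (algebraMap ℝ B), ← map_add, ← map_mul]; congr 1; ring
  refine ⟨(R + 1) / 2, by positivity, ?_, ?_⟩
  · convert h.mul hc (h.add h1 (h.sq (1 + x i))) using 1
    rw [e]; linear_combination (- x i) * half
  · convert h.mul hc (h.add h1 (h.sq (1 - x i))) using 1
    rw [e]; linear_combination (x i) * half

theorem sumSq : PreOrd {b : B | IsSumSq b} where
  add := fun ha hb => IsSumSq.add ha hb
  mul := fun ha hb => IsSumSq.mul ha hb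
  sq := fun a => IsSumSq.mul_self a

theorem sumSq_sub (h : PreOrd T) {b : B} (hb : IsSumSq b) : b ∈ T := by
  induction hb with
  | zero => exact h.zero
  | sq_add a _ ih => exact h.add (h.sq a) ih

/-- Argument of Woermann: a compactness certificate yields the archimedean property. -/
theorem archimedean (h : PreOrd T) {ι : Type*} [Fintype ι] (x : ι → B)
    (hx : Algebra.adjoin ℝ (Set.range x) = ⊤) (R : ℝ) (hR : 0 ≤ R)
    (hm : ∃ s ∈ T, ∃ t ∈ T, s * (algebraMap ℝ B R - ∑ i, x i * x i) = 1 + t) (b : B) :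
    Bdd T b := by
  obtain ⟨s, hs, t, ht, e⟩ := hm
  set a := ∑ i, x i * x i with ha
  have haT : a ∈ T := h.sum_mem _ _ fun i _ => h.sq _
  have h0 := (sumSq (B := B)).adjoin (algebraMap ℝ B R - a)
  have hA0 : ∀ b, Bdd _ b := h0.bdd_of_adjoin hx (by
    rintro _ ⟨i, rfl⟩
    refine h0.bdd_gen x R hR ?_ i
    exact ⟨0, sumSq.zero, 1, sumSq.one, by rw [← ha]; ring⟩)
  have h1t : 1 + t ∈ T := h.add h.one ht
  have hRa : (1 + t) * (algebraMap ℝ B R - a) ∈ T := by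
    rw [← e, mul_assoc]; exact h.mul hs (h.sq _)
  obtain ⟨N, hN, -, p, hp, q, hq, e2⟩ := hA0 t
  have h3 : (1 + t) * (algebraMap ℝ B N - t) ∈ T := by
    rw [e2]
    convert h.add (h.mul h1t (h.sumSq_sub hp)) (h.mul (h.sumSq_sub hq) hRa) using 1
    ring
  have h4 : algebraMap ℝ B (N + N * N / 4) - t ∈ T := by
    convert h.add h3 (h.sq (t - algebraMap ℝ B (N / 2))) using 1
    have e3 : algebraMap ℝ B N = 2 * algebraMap ℝ B (N / 2) := by
      rw [← map_ofNat (algebraMap ℝ B) 2, ← map_mul]; congr 1; ring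
    have e4 : algebraMap ℝ B (N + N * N / 4) =
        algebraMap ℝ B N + algebraMap ℝ B (N / 2) * algebraMap ℝ B (N / 2) := by
      rw [← map_mul, ← map_add]; congr 1; ring
    rw [e4, e3]; ring
  have h5 : algebraMap ℝ B (R * (1 + (N + N * N / 4))) - a ∈ T := by
    convert h.add (h.add hRa (h.mul ht haT)) (h.mul (h.const hR) h4) using 1
    rw [map_mul, map_add, map_one]; ring
  refine h.bdd_of_adjoin hx ?_ b
  rintro _ ⟨i, rfl⟩
  exact h.bdd_gen x _ (by positivity) h5 i

theorem mem_of_cert (h : PreOrd T) (harch : ∀ b : B, Bdd T b) (f : B)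
    (hf : ∃ s ∈ T, ∃ t ∈ T, s * f = 1 + t) : f ∈ T := by
  obtain ⟨s, hs, t, ht, e⟩ := hf
  obtain ⟨N, hN, -, hNs⟩ := harch s
  obtain ⟨r, hr, hrf, -⟩ := harch f
  have hN1 : algebraMap ℝ B (N + 1) - s ∈ T := by
    convert h.add hNs h.one using 1; rw [map_add, map_one]; ring
  have hN0 : 0 < N + 1 := by positivity
  have step : ∀ r : ℝ, 0 ≤ r → algebraMap ℝ B r + f ∈ T →
      algebraMap ℝ B (r - 1 / (N + 1)) + f ∈ T := by
    intro r hr hrf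
    have h1 := h.add (h.add (h.mul hN1 hrf) ht) (h.mul (h.const hr) hs)
    have h2 := h.mul (h.const (r := 1 / (N + 1)) (by positivity)) h1
    convert h2 using 1
    have e1 : algebraMap ℝ B (1 / (N + 1)) * algebraMap ℝ B (N + 1) = 1 := by
      rw [← map_mul, one_div_mul_cancel hN0.ne', map_one]
    rw [map_sub]
    linear_combination (-algebraMap ℝ B r - f) * e1 + algebraMap ℝ B (1 / (N + 1)) * e
  have hk : ∀ k : ℕ, f ∈ T ∨ algebraMap ℝ B (r - k * (1 / (N + 1))) + f ∈ T := by
    intro k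
    induction k with
    | zero => right; simpa using hrf
    | succ k ih =>
      rcases ih with ih | ih
      · exact Or.inl ih
      · by_cases h0 : 0 ≤ r - k * (1 / (N + 1))
        · right
          have := step _ h0 ih
          convert this using 3
          push_cast; ring
        · left
          push Not at h0
          convert h.add ih (h.const (r := -(r - k * (1 / (N + 1)))) (by linarith)) using 1
          rw [map_neg]; ring
  obtain ⟨k, hk'⟩ := exists_nat_gt (r * (N + 1))
  have h0 : r - k * (1 / (N + 1)) ≤ 0 := by
    rw [sub_nonpos, mul_one_div, le_div_iff₀ hN0]; exact hk'.le
  rcases hk k with h1 | h1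
  · exact h1
  · convert h.add h1 (h.const (r := -(r - k * (1 / (N + 1)))) (by linarith)) using 1
    rw [map_neg]; ring

end PreOrd


section Near

variable {K : Type} [CommRing K] [LinearOrder K] [IsStrictOrderedRing K] (ι : ℝ →+* K)

theorem iota_nonneg {r : ℝ} (hr : 0 ≤ r) : 0 ≤ ι r := by
  rw [← Real.mul_self_sqrt hr, map_mul]; exact mul_self_nonneg _

theorem iota_mono {r s : ℝ} (h : r ≤ s) : ι r ≤ ι s := by
  have := iota_nonneg ι (sub_nonneg.mpr h)
  rw [map_sub] at this; linarith

theorem iota_pos {r : ℝ} (hr : 0 < r) : 0 < ι r :=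
  lt_of_le_of_ne (iota_nonneg ι hr.le) (by
    intro h
    have : ι r = ι 0 := by rw [map_zero, ← h]
    exact hr.ne' (ι.injective this))

theorem iota_lt {r s : ℝ} (h : r < s) : ι r < ι s := by
  have := iota_pos ι (sub_pos.mpr h)
  rw [map_sub] at this; linarith

theorem iota_abs (r : ℝ) : |ι r| = ι |r| := by
  rcases le_total 0 r with h | h
  · rw [abs_of_nonneg h, abs_of_nonneg (iota_nonneg ι h)]
  · have : ι r ≤ 0 := by simpa using iota_mono ι h
    rw [abs_of_nonpos h, abs_of_nonpos this, map_neg]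

/-- `x` is infinitely close to `r * M`, relative to `M`. -/
def Near (M x : K) (r : ℝ) : Prop := ∀ ε : ℝ, 0 < ε → |x - ι r * M| ≤ ι ε * M

variable {ι}

theorem near_exists {M x : K} (hM : 0 < M) {C : ℝ} (h : |x| ≤ ι C * M) : ∃ r, Near ι M x r := by
  rw [abs_le] at h
  let S : Set ℝ := {r | ι r * M ≤ x}
  have hne : S.Nonempty := ⟨-C, by
    change ι (-C) * M ≤ x
    rw [map_neg]; linarith [h.1]⟩
  have hb : BddAbove S := ⟨C, fun r (hr : ι r * M ≤ x) => by
    by_contra hc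
    push Not at hc
    have := mul_lt_mul_of_pos_right (iota_lt ι hc) hM
    linarith [h.2]⟩
  refine ⟨sSup S, fun ε hε => ?_⟩
  rw [abs_le]
  constructor
  · obtain ⟨r, hr, hlt⟩ := exists_lt_of_lt_csSup hne (show sSup S - ε < sSup S by linarith)
    have h1 := mul_lt_mul_of_pos_right (iota_lt ι hlt) hM
    have hr' : ι r * M ≤ x := hr
    rw [map_sub, sub_mul] at h1
    linarith
  · by_contra hc
    push Not at hc
    have : sSup S + ε ∈ S := by
      change ι (sSup S + ε) * M ≤ x
      rw [map_add, add_mul]; linarith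
    linarith [le_csSup hb this]

theorem near_add {M x y : K} {r s : ℝ} (hx : Near ι M x r) (hy : Near ι M y s) :
    Near ι M (x + y) (r + s) := by
  intro ε hε
  have h1 := hx (ε / 2) (by positivity)
  have h2 := hy (ε / 2) (by positivity)
  have e : ι ε = ι (ε / 2) + ι (ε / 2) := by rw [← map_add]; congr 1; ring
  have : x + y - ι (r + s) * M = (x - ι r * M) + (y - ι s * M) := by rw [map_add]; ring
  rw [this, e, add_mul]
  exact (abs_add_le _ _).trans (add_le_add h1 h2)

theorem near_bound {M x : K} {r : ℝ} (hM : 0 ≤ M) (hx : Near ι M x r) :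
    |x| ≤ ι (|r| + 1) * M := by
  have h1 := hx 1 one_pos
  have : |x| ≤ |x - ι r * M| + |ι r * M| := by
    simpa using abs_add_le (x - ι r * M) (ι r * M)
  rw [abs_mul, iota_abs, abs_of_nonneg hM] at this
  rw [map_add, add_mul]; linarith

theorem near_mul {M M' x y : K} {r s : ℝ} (hM : 0 ≤ M) (hM' : 0 ≤ M')
    (hx : Near ι M x r) (hy : Near ι M' y s) : Near ι (M * M') (x * y) (r * s) := by
  intro ε hε
  have hs : 0 < |s| + 1 := by positivity
  have hr : 0 < |r| + 1 := by positivity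
  have h1 := hx (ε / (2 * (|s| + 1))) (by positivity)
  have h2 := hy (ε / (2 * (|r| + 1))) (by positivity)
  have h3 := near_bound hM' hy
  have e : x * y - ι (r * s) * (M * M') = (x - ι r * M) * y + (ι r * M) * (y - ι s * M') := by
    rw [map_mul]; ring
  rw [e]
  refine (abs_add_le _ _).trans ?_
  rw [abs_mul, abs_mul, abs_mul, iota_abs, abs_of_nonneg hM]
  have h4 : |x - ι r * M| * |y| ≤
      (ι (ε / (2 * (|s| + 1))) * M) * (ι (|s| + 1) * M') :=
    mul_le_mul h1 h3 (abs_nonneg _)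
      (mul_nonneg (iota_nonneg ι (by positivity)) hM)
  have h5 : ι |r| * M * |y - ι s * M'| ≤
      (ι (|r| + 1) * M) * (ι (ε / (2 * (|r| + 1))) * M') :=
    mul_le_mul (mul_le_mul_of_nonneg_right (iota_mono ι (by linarith)) hM) h2 (abs_nonneg _)
      (mul_nonneg (iota_nonneg ι (by positivity)) hM)
  have e1 : ι (ε / (2 * (|s| + 1))) * ι (|s| + 1) = ι (ε / 2) := by
    rw [← map_mul]; congr 1; field_simp
  have e2 : ι (|r| + 1) * ι (ε / (2 * (|r| + 1))) = ι (ε / 2) := by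
    rw [← map_mul]; congr 1; field_simp
  have e3 : ι ε = ι (ε / 2) + ι (ε / 2) := by rw [← map_add]; congr 1; ring
  calc _ ≤ _ := add_le_add h4 h5
    _ = ι ε * (M * M') := by
      rw [e3]; linear_combination (M * M') * e1 + (M * M') * e2

theorem near_const (r : ℝ) : Near ι 1 (ι r) r := by
  intro ε hε
  simpa using (iota_nonneg ι hε.le)

theorem near_cmul {M x : K} {r : ℝ} (hM : 0 ≤ M) (hx : Near ι M x r) (c : ℝ) :
    Near ι M (ι c * x) (c * r) := by
  simpa using near_mul zero_le_one hM (near_const c) hx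

theorem near_zero {M : K} (hM : 0 ≤ M) : Near ι M 0 0 := by
  intro ε hε
  simpa using mul_nonneg (iota_nonneg ι hε.le) hM

theorem near_sum {M : K} (hM : 0 ≤ M) {α : Type*} (s : Finset α) (x : α → K) (r : α → ℝ)
    (h : ∀ i ∈ s, Near ι M (x i) (r i)) : Near ι M (∑ i ∈ s, x i) (∑ i ∈ s, r i) := by
  classical
  induction s using Finset.induction_on with
  | empty => simpa using near_zero hM
  | insert a s ha ih =>
    rw [Finset.sum_insert ha, Finset.sum_insert ha]
    exact near_add (h a (by simp)) (ih fun i hi => h i (by simp [hi]))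

theorem near_prod {α : Type*} (s : Finset α) (M x : α → K) (r : α → ℝ)
    (hM : ∀ i, 0 ≤ M i)
    (h : ∀ i ∈ s, Near ι (M i) (x i) (r i)) :
    Near ι (∏ i ∈ s, M i) (∏ i ∈ s, x i) (∏ i ∈ s, r i) := by
  classical
  induction s using Finset.induction_on with
  | empty => simpa using near_const (ι := ι) 1
  | insert a s ha ih =>
    rw [Finset.prod_insert ha, Finset.prod_insert ha, Finset.prod_insert ha]
    exact near_mul (hM a) (Finset.prod_nonneg fun i _ => hM i) (h a (by simp))
      (ih fun i hi => h i (by simp [hi]))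

theorem near_pow {M x : K} {r : ℝ} (hM : 0 ≤ M) (hx : Near ι M x r) (k : ℕ) :
    Near ι (M ^ k) (x ^ k) (r ^ k) := by
  have := near_prod (Finset.range k) (fun _ => M) (fun _ => x) (fun _ => r) (fun _ => hM)
    (fun _ _ => hx)
  simpa using this

theorem near_pos {M x : K} {r : ℝ} (hM : 0 < M) (hx : Near ι M x r) (hr : 0 < r) : 0 < x := by
  have h1 := (abs_le.mp (hx (r / 2) (by positivity))).1
  have e3 : ι r = ι (r / 2) + ι (r / 2) := by rw [← map_add]; congr 1; ring
  have := mul_pos (iota_pos ι (half_pos hr)) hM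
  rw [e3] at h1
  linarith

theorem near_neg {M x : K} {r : ℝ} (hM : 0 ≤ M) (hx : Near ι M x r) : Near ι M (-x) (-r) := by
  simpa using near_cmul hM hx (-1)

theorem near_nonneg {M x : K} {r : ℝ} (hM : 0 < M) (hx : Near ι M x r) (h0 : 0 ≤ x) : 0 ≤ r := by
  by_contra hc
  have := near_pos hM (near_neg hM.le hx) (by linarith)
  linarith

theorem near_unique {M x : K} {r s : ℝ} (hM : 0 < M) (hx : Near ι M x r) (hy : Near ι M x s) :
    r = s := by
  have h1 := near_add hx (near_neg hM.le hy)
  rw [add_neg_cancel] at h1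
  have h2 := near_nonneg hM h1 le_rfl
  have h3 := near_neg hM.le h1
  rw [neg_zero] at h3
  have h4 := near_nonneg hM h3 le_rfl
  linarith

theorem near_eval {n : ℕ} {x : Fin n → K} {r : Fin n → ℝ} (h : ∀ i, Near ι 1 (x i) (r i))
    (p : MvPolynomial (Fin n) ℝ) : Near ι 1 (MvPolynomial.eval₂ ι x p) (MvPolynomial.eval r p) := by
  induction p using MvPolynomial.induction_on with
  | C a => simpa using near_const (ι := ι) a
  | add p q hp hq =>
    rw [MvPolynomial.eval₂_add, map_add]; exact near_add hp hq
  | mul_X p i hp =>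
    rw [MvPolynomial.eval₂_mul, map_mul, MvPolynomial.eval₂_X, MvPolynomial.eval_X]
    simpa using near_mul zero_le_one zero_le_one hp (h i)

/-- Points of a weighted-coercive sublevel set over an ordered ring are finite. -/
theorem finite_of_weighted {n : ℕ} (ψ : MvPolynomial (Fin n) ℝ) (D ω : Fin n → ℕ) (N : ℕ)
    (hN : 0 < N) (hD : ∀ b, D b * ω b = N)
    (hmono : ∀ α ∈ ψ.support, ∑ b, α b * ω b ≤ N)
    (hpos : ∀ a : Fin n → ℝ, a ≠ 0 →
      0 < ∑ α ∈ ψ.support, if ∑ b, α b * ω b = N then ψ.coeff α * ∏ b, a b ^ α b else 0)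
    (ξ : Fin n → K) (hξ : MvPolynomial.eval₂ ι ξ ψ ≤ 0) (b : Fin n) :
    ∃ C : ℝ, |ξ b| ≤ ι C := by
  have hD0 : ∀ b, D b ≠ 0 := fun b h => by have := hD b; simp [h] at this; omega
  by_contra hcon
  push Not at hcon
  obtain ⟨b0, -, hb0⟩ := Finset.exists_max_image Finset.univ (fun b => |ξ b| ^ D b) ⟨b, by simp⟩
  set M := |ξ b0| ^ D b0 with hMdef
  have hMinf : ∀ C : ℝ, ι C < M := by
    intro C
    have h1 := hcon (max C 1)
    have h2 : 1 ≤ |ξ b| := by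
      have : ι 1 ≤ ι (max C 1) := iota_mono ι (le_max_right _ _)
      rw [map_one] at this; linarith
    calc ι C ≤ ι (max C 1) := iota_mono ι (le_max_left _ _)
      _ < |ξ b| := h1
      _ ≤ |ξ b| ^ D b := le_self_pow₀ h2 (hD0 b)
      _ ≤ M := hb0 b (by simp)
  have hM1 : 1 < M := by simpa using hMinf 1
  have hM0 : 0 < M := by linarith
  have hle : ∀ b, |ξ b| ^ D b ≤ M := fun b => hb0 b (by simp)
  -- the standard parts
  have hρ : ∀ b, ∃ r, Near ι M (|ξ b| ^ D b) r := fun b => near_exists hM0 (C := 1) (by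
    rw [abs_of_nonneg (by positivity)]; simpa using hle b)
  choose ρ hρ using hρ
  have hρ0 : ∀ b, 0 ≤ ρ b := fun b => near_nonneg hM0 (hρ b) (by positivity)
  have hroot : ∀ b, ∃ c : ℝ, 0 ≤ c ∧ c ^ D b = ρ b := fun b =>
    ⟨ρ b ^ ((D b : ℝ)⁻¹), Real.rpow_nonneg (hρ0 b) _, Real.rpow_inv_natCast_pow (hρ0 b) (hD0 b)⟩
  choose c hc0 hc using hroot
  have hsgn : ∀ b, ∃ s : ℝ, s * s = 1 ∧ ξ b = ι s * |ξ b| := by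
    intro b
    rcases le_total 0 (ξ b) with h | h
    · exact ⟨1, by norm_num, by simp [abs_of_nonneg h]⟩
    · exact ⟨-1, by norm_num, by simp [abs_of_nonpos h]⟩
  choose s hs1 hs using hsgn
  have habsN : ∀ α : Fin n →₀ ℕ, (∏ b, |ξ b| ^ α b) ^ N = ∏ b, (|ξ b| ^ D b) ^ (α b * ω b) := by
    intro α
    rw [← Finset.prod_pow]
    refine Finset.prod_congr rfl fun b _ => ?_
    rw [← pow_mul, ← pow_mul, ← hD b]; congr 1; ring
  have hpowle : ∀ α : Fin n →₀ ℕ, (∏ b, |ξ b| ^ α b) ^ N ≤ M ^ (∑ b, α b * ω b) := by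
    intro α
    rw [habsN, ← Finset.prod_pow_eq_pow_sum]
    exact Finset.prod_le_prod (fun b _ => by positivity)
      fun b _ => pow_le_pow_left₀ (by positivity) (hle b) _
  have hnear : ∀ α ∈ ψ.support, Near ι M (∏ b, |ξ b| ^ α b)
      (if ∑ b, α b * ω b = N then ∏ b, c b ^ α b else 0) := by
    intro α hα
    have hp0 : 0 ≤ ∏ b, |ξ b| ^ α b := Finset.prod_nonneg fun b _ => by positivity
    split_ifs with hw
    · have h1 : ∏ b, |ξ b| ^ α b ≤ M := by
        have := hpowle α
        rw [hw] at this
        exact (pow_le_pow_iff_left₀ hp0 hM0.le hN.ne').mp this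
      obtain ⟨r, hr⟩ := near_exists (ι := ι) hM0 (C := 1) (x := ∏ b, |ξ b| ^ α b) (by
        rw [abs_of_nonneg hp0]; simpa using h1)
      have hr0 := near_nonneg hM0 hr hp0
      have h2 := near_pow hM0.le hr N
      have h3 := near_prod Finset.univ (fun b => M ^ (α b * ω b))
        (fun b => (|ξ b| ^ D b) ^ (α b * ω b)) (fun b => ρ b ^ (α b * ω b))
        (fun b => by positivity) (fun b _ => near_pow hM0.le (hρ b) _)
      rw [Finset.prod_pow_eq_pow_sum, hw, ← habsN] at h3
      have h4 := near_unique (by positivity) h2 h3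
      have h5 : ∏ b, ρ b ^ (α b * ω b) = (∏ b, c b ^ α b) ^ N := by
        rw [← Finset.prod_pow]
        refine Finset.prod_congr rfl fun b _ => ?_
        rw [← hc, ← pow_mul, ← pow_mul, ← hD b]; congr 1; ring
      rw [h5] at h4
      have h6 := (pow_left_inj₀ hr0 (Finset.prod_nonneg fun b _ => pow_nonneg (hc0 b) _)
        hN.ne').mp h4
      rwa [← h6]
    · have hlt : ∑ b, α b * ω b ≤ N - 1 := by have := hmono α hα; omega
      intro ε hε
      rw [map_zero, zero_mul, sub_zero, abs_of_nonneg hp0]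
      by_contra hc'
      push Not at hc'
      have h1 : (ι ε * M) ^ N < (∏ b, |ξ b| ^ α b) ^ N :=
        pow_lt_pow_left₀ hc' (mul_nonneg (iota_nonneg ι hε.le) hM0.le) hN.ne'
      have h2 : (ι ε * M) ^ N < M ^ (N - 1) :=
        h1.trans_le ((hpowle α).trans (pow_le_pow_right₀ hM1.le hlt))
      have h3 : M ^ N = M ^ (N - 1) * M := by rw [← pow_succ]; congr 1; omega
      have h4 : ι (ε ^ N) * M < 1 := by
        rw [mul_pow, h3] at h2
        by_contra h5
        push Not at h5
        have : M ^ (N - 1) * 1 ≤ M ^ (N - 1) * (ι (ε ^ N) * M) :=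
          mul_le_mul_of_nonneg_left h5 (by positivity)
        rw [map_pow] at this
        linarith
      have h5 := mul_lt_mul_of_pos_left (hMinf (1 / ε ^ N)) (iota_pos ι (pow_pos hε N))
      rw [← map_mul, mul_one_div_cancel (by positivity), map_one] at h5
      linarith
  have hfull : Near ι M (MvPolynomial.eval₂ ι ξ ψ)
      (∑ α ∈ ψ.support, if ∑ b, α b * ω b = N then
        ψ.coeff α * ∏ b, (s b * c b) ^ α b else 0) := by
    rw [MvPolynomial.eval₂_eq']
    refine near_sum hM0.le _ _ _ fun α hα => ?_
    have h1 := near_cmul hM0.le (near_cmul hM0.le (hnear α hα) (∏ b, s b ^ α b)) (ψ.coeff α)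
    have e1 : ∏ b, ξ b ^ α b = ι (∏ b, s b ^ α b) * ∏ b, |ξ b| ^ α b := by
      rw [map_prod, ← Finset.prod_mul_distrib]
      refine Finset.prod_congr rfl fun b _ => ?_
      rw [map_pow, ← mul_pow, ← hs]
    rw [e1]
    convert h1 using 1
    split_ifs
    · rw [← Finset.prod_mul_distrib]; simp_rw [mul_pow]
    · simp
  have hne : (fun b => s b * c b) ≠ 0 := by
    intro h
    have h1 : s b0 * c b0 = 0 := congrFun h b0
    have h2 : c b0 = 0 := by
      have : s b0 ≠ 0 := by intro h'; have := hs1 b0; simp [h'] at this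
      simpa [this] using h1
    have h3 := hρ b0
    rw [← hc b0, h2, zero_pow (hD0 b0)] at h3
    have h4 : Near ι M M 1 := by
      intro ε hε
      simpa using mul_nonneg (iota_nonneg ι hε.le) hM0.le
    have := near_unique hM0 h3 h4
    norm_num at this
  have := near_pos hM0 hfull (hpos _ hne)
  linarith

end Near


section
open Filter Topology

section Struct

open Polynomial in
theorem tendsto_div_pow (q : ℝ[X]) (N : ℕ) (h : q.natDegree ≤ N) :
    Tendsto (fun t => q.eval t / t ^ N) atTop (𝓝 (q.coeff N)) := by
  have e : ∀ᶠ t : ℝ in atTop, q.eval t / t ^ N =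
      ∑ k ∈ Finset.range (N + 1), q.coeff k * (t ^ k / t ^ N) := by
    filter_upwards with t
    rw [Polynomial.eval_eq_sum_range' (Nat.lt_succ_of_le h), Finset.sum_div]
    exact Finset.sum_congr rfl fun k _ => by ring
  rw [tendsto_congr' e]
  have : q.coeff N = ∑ k ∈ Finset.range (N + 1), q.coeff k * (if k = N then 1 else 0) := by
    simp
  rw [this]
  refine tendsto_finsetSum _ fun k hk => Tendsto.const_mul _ ?_
  split_ifs with hkN
  · subst hkN
    refine tendsto_const_nhds.congr' ?_
    filter_upwards [eventually_gt_atTop 0] with t ht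
    rw [div_self (by positivity)]
  · have hlt : k < N := by have := Finset.mem_range.mp hk; omega
    exact tendsto_pow_div_pow_atTop_zero hlt

open Polynomial in
theorem natDegree_le_of_bound (q : ℝ[X]) (N : ℕ) (C : ℝ)
    (h : ∀ t : ℝ, 0 ≤ t → |q.eval t| ≤ C * (1 + t ^ N)) : q.natDegree ≤ N := by
  by_contra hc
  push Not at hc
  have h1 := tendsto_div_pow q q.natDegree le_rfl
  have h2 : Tendsto (fun t : ℝ => q.eval t / t ^ q.natDegree) atTop (𝓝 0) := by
    have h3 : Tendsto (fun t : ℝ => C * (t ^ 0 / t ^ q.natDegree + t ^ N / t ^ q.natDegree)) atTop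
        (𝓝 (C * (0 + 0))) :=
      ((tendsto_pow_div_pow_atTop_zero (by omega)).add (tendsto_pow_div_pow_atTop_zero hc)).const_mul C
    simp only [add_zero, mul_zero] at h3
    refine squeeze_zero_norm' ?_ h3
    filter_upwards [eventually_gt_atTop 0] with t ht
    rw [Real.norm_eq_abs, abs_div, abs_of_pos (pow_pos ht q.natDegree), ← add_div, mul_div_assoc']
    gcongr
    simpa using h t ht.le
  have h4 := tendsto_nhds_unique h1 h2
  have : q = 0 := by simpa using h4
  rw [this] at hc
  simp at hc

open Polynomial in
theorem poly_bound (q : ℝ[X]) : ∃ C : ℝ, 0 ≤ C ∧ ∀ s : ℝ, |q.eval s| ≤ C * (1 + |s| ^ q.natDegree) := by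
  refine ⟨∑ k ∈ Finset.range (q.natDegree + 1), |q.coeff k|,
    Finset.sum_nonneg fun _ _ => abs_nonneg _, fun s => ?_⟩
  rw [Polynomial.eval_eq_sum_range, Finset.sum_mul]
  refine (Finset.abs_sum_le_sum_abs _ _).trans (Finset.sum_le_sum fun k hk => ?_)
  rw [abs_mul, abs_pow]
  refine mul_le_mul_of_nonneg_left ?_ (abs_nonneg _)
  have hk' : k ≤ q.natDegree := by have := Finset.mem_range.mp hk; omega
  rcases le_total |s| 1 with h | h
  · have := pow_le_one₀ (n := k) (abs_nonneg s) h
    have : 0 ≤ |s| ^ q.natDegree := by positivity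
    linarith
  · have := pow_le_pow_right₀ h hk'
    linarith

open Polynomial in
theorem lead_pos_of_convex (q : ℝ[X]) (hq : ConvexOn ℝ Set.univ (fun t : ℝ => q.eval t))
    (hd : 2 ≤ q.natDegree) : 0 < q.leadingCoeff := by
  have hq0 : q ≠ 0 := by rintro rfl; simp at hd
  by_contra hc
  have hlt : q.leadingCoeff < 0 := lt_of_le_of_ne (not_lt.mp hc) (by simpa using hq0)
  set b := q.eval 0 - q.eval (-1) with hb
  set l : ℝ[X] := Polynomial.C b * Polynomial.X + Polynomial.C (q.eval 0) with hl
  have hldeg : l.degree < q.degree := by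
    refine lt_of_le_of_lt (degree_linear_le) ?_
    rw [degree_eq_natDegree hq0]
    exact_mod_cast hd
  have h1 : (q - l).leadingCoeff = q.leadingCoeff := leadingCoeff_sub_of_degree_lt hldeg
  have h2 : 0 < (q - l).degree := by
    rw [degree_sub_eq_left_of_degree_lt hldeg, degree_eq_natDegree hq0]
    exact_mod_cast (by omega : 0 < q.natDegree)
  have h3 := (q - l).tendsto_atBot_of_leadingCoeff_nonpos h2 (by rw [h1]; exact hlt.le)
  obtain ⟨t, ht0, ht⟩ := ((eventually_gt_atTop (0 : ℝ)).and
    (h3.eventually (eventually_lt_atBot 0))).exists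
  have h4 := hq.2 (Set.mem_univ (-1 : ℝ)) (Set.mem_univ t)
    (show 0 ≤ t / (1 + t) by positivity) (show 0 ≤ 1 / (1 + t) by positivity) (by field_simp; ring)
  have h5 : (t / (1 + t)) • (-1 : ℝ) + (1 / (1 + t)) • t = 0 := by
    simp only [smul_eq_mul]; ring
  rw [h5] at h4
  simp only [smul_eq_mul] at h4
  have h6 : q.eval 0 * (1 + t) ≤ t * q.eval (-1) + q.eval t := by
    have h7 : t / (1 + t) * q.eval (-1) + 1 / (1 + t) * q.eval t =
        (t * q.eval (-1) + q.eval t) / (1 + t) := by ring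
    rw [h7, le_div_iff₀ (by positivity)] at h4
    exact h4
  simp only [hl, eval_sub, eval_add, eval_mul, eval_C, eval_X] at ht
  nlinarith

variable {n : ℕ}

/-- The restriction of a polynomial to a line through the origin. -/
noncomputable def lineP (φ : MvPolynomial (Fin n) ℝ) (v : Fin n → ℝ) : Polynomial ℝ :=
  MvPolynomial.aeval (fun i => Polynomial.C (v i) * Polynomial.X) φ

theorem eval_aeval_poly (φ : MvPolynomial (Fin n) ℝ) (u : Fin n → Polynomial ℝ) (t : ℝ) :
    (MvPolynomial.aeval u φ).eval t = MvPolynomial.eval (fun i => (u i).eval t) φ := by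
  induction φ using MvPolynomial.induction_on with
  | C a => simp
  | add p q hp hq => simp [hp, hq]
  | mul_X p i hp => simp [hp]

theorem lineP_eval (φ : MvPolynomial (Fin n) ℝ) (v : Fin n → ℝ) (t : ℝ) :
    (lineP φ v).eval t = MvPolynomial.eval (t • v) φ := by
  rw [lineP, eval_aeval_poly]
  have : (fun i => (Polynomial.C (v i) * Polynomial.X).eval t) = t • v := by
    ext i
    rw [Polynomial.eval_mul, Polynomial.eval_C, Polynomial.eval_X, Pi.smul_apply, smul_eq_mul,
      mul_comm]
  rw [this]

/-- Linear change of coordinates. -/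
noncomputable def subst (U : Matrix (Fin n) (Fin n) ℝ) (φ : MvPolynomial (Fin n) ℝ) :
    MvPolynomial (Fin n) ℝ :=
  MvPolynomial.aeval (fun i => ∑ b, MvPolynomial.C (U b i) * MvPolynomial.X b) φ

theorem subst_eval₂ {K : Type} [CommRing K] (ι : ℝ →+* K) (U : Matrix (Fin n) (Fin n) ℝ)
    (φ : MvPolynomial (Fin n) ℝ) (ξ : Fin n → K) :
    MvPolynomial.eval₂ ι ξ (subst U φ) =
      MvPolynomial.eval₂ ι (fun i => ∑ b, ι (U b i) * ξ b) φ := by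
  rw [subst]
  induction φ using MvPolynomial.induction_on with
  | C a => simp
  | add p q hp hq => simp only [map_add, MvPolynomial.eval₂_add, hp, hq]
  | mul_X p i hp =>
    rw [map_mul, MvPolynomial.eval₂_mul, hp, MvPolynomial.eval₂_mul, MvPolynomial.aeval_X,
      MvPolynomial.eval₂_X]
    congr 1
    rw [← MvPolynomial.coe_eval₂Hom, map_sum]
    simp

theorem subst_eval (U : Matrix (Fin n) (Fin n) ℝ) (φ : MvPolynomial (Fin n) ℝ) (ξ : Fin n → ℝ) :
    MvPolynomial.eval ξ (subst U φ) = MvPolynomial.eval (∑ b, ξ b • U b) φ := by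
  have := subst_eval₂ (RingHom.id ℝ) U φ ξ
  rw [← MvPolynomial.eval₂_id, this, ← MvPolynomial.eval₂_id]
  congr 1
  ext i
  simp [mul_comm]

/-- Weighted rescaling as a polynomial in the scale. -/
noncomputable def scaleP (ψ : MvPolynomial (Fin n) ℝ) (ω : Fin n → ℕ) (ξ : Fin n → ℝ) :
    Polynomial ℝ :=
  MvPolynomial.aeval (fun b => Polynomial.C (ξ b) * Polynomial.X ^ ω b) ψ

theorem scaleP_eval (ψ : MvPolynomial (Fin n) ℝ) (ω : Fin n → ℕ) (ξ : Fin n → ℝ) (t : ℝ) :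
    (scaleP ψ ω ξ).eval t = MvPolynomial.eval (fun b => t ^ ω b * ξ b) ψ := by
  rw [scaleP, eval_aeval_poly]
  have : (fun b => (Polynomial.C (ξ b) * Polynomial.X ^ ω b).eval t) =
      fun b => t ^ ω b * ξ b := by
    ext i
    rw [Polynomial.eval_mul, Polynomial.eval_C, Polynomial.eval_pow, Polynomial.eval_X, mul_comm]
  rw [this]

theorem scaleP_coeff (ψ : MvPolynomial (Fin n) ℝ) (ω : Fin n → ℕ) (ξ : Fin n → ℝ) (k : ℕ) :
    (scaleP ψ ω ξ).coeff k =
      ∑ α ∈ ψ.support, if ∑ b, α b * ω b = k then ψ.coeff α * ∏ b, ξ b ^ α b else 0 := by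
  rw [scaleP, MvPolynomial.aeval_def, MvPolynomial.eval₂_eq', Polynomial.finsetSum_coeff]
  refine Finset.sum_congr rfl fun α _ => ?_
  have : ∏ b, (Polynomial.C (ξ b) * Polynomial.X ^ ω b) ^ α b =
      Polynomial.C (∏ b, ξ b ^ α b) * Polynomial.X ^ (∑ b, α b * ω b) := by
    simp_rw [mul_pow, Finset.prod_mul_distrib, ← pow_mul, map_prod, map_pow,
      Finset.prod_pow_eq_pow_sum, mul_comm]
  rw [this, ← Polynomial.C_eq_algebraMap, ← mul_assoc, ← Polynomial.C_mul, Polynomial.coeff_C_mul_X_pow]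
  simp only [eq_comm]

end Struct

end


section
open Filter Topology

section Struct2

variable {n : ℕ}

theorem exists_min_basis (d : (Fin n → ℝ) → ℕ) :
    ∃ U : Matrix (Fin n) (Fin n) ℝ, U.det ≠ 0 ∧
      ∀ (c : Fin n → ℝ) (b : Fin n), c b ≠ 0 → d (U b) ≤ d (∑ k, c k • U k) := by
  classical
  have hne : ∃ m : ℕ, ∃ U : Matrix (Fin n) (Fin n) ℝ, U.det ≠ 0 ∧ ∑ b, d (U b) = m :=
    ⟨_, 1, by simp, rfl⟩
  obtain ⟨U, hU, hm⟩ := Nat.find_spec hne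
  refine ⟨U, hU, fun c b hcb => ?_⟩
  by_contra hlt
  push Not at hlt
  have hdet : (U.updateRow b (∑ k, c k • U k)).det ≠ 0 := by
    rw [Matrix.det_updateRow_sum, smul_eq_mul]; exact mul_ne_zero hcb hU
  have h1 := Nat.find_min' hne ⟨_, hdet, rfl⟩
  rw [← hm] at h1
  refine absurd h1 (not_le.mpr ?_)
  refine Finset.sum_lt_sum (fun k _ => ?_) ⟨b, Finset.mem_univ b, ?_⟩
  · by_cases hk : k = b
    · subst hk; rw [Matrix.updateRow_self]; exact hlt.le
    · rw [Matrix.updateRow_ne hk]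
  · rw [Matrix.updateRow_self]; exact hlt

theorem lineP_convex (φ : MvPolynomial (Fin n) ℝ)
    (hconv : ConvexOn ℝ Set.univ (fun x => MvPolynomial.eval x φ)) (v : Fin n → ℝ) :
    ConvexOn ℝ Set.univ (fun t : ℝ => (lineP φ v).eval t) := by
  refine ⟨convex_univ, fun s _ t _ a b ha hb hab => ?_⟩
  simp only [lineP_eval]
  have := hconv.2 (Set.mem_univ (s • v)) (Set.mem_univ (t • v)) ha hb hab
  convert this using 2
  rw [add_smul, smul_assoc, smul_assoc]

theorem scale_upper (φ : MvPolynomial (Fin n) ℝ)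
    (hconv : ConvexOn ℝ Set.univ (fun x => MvPolynomial.eval x φ))
    (U : Matrix (Fin n) (Fin n) ℝ) (ω : Fin n → ℕ) (N : ℕ)
    (hD : ∀ b, (lineP φ (U b)).natDegree * ω b = N) (ξ : Fin n → ℝ) :
    ∃ C : ℝ, ∀ t : ℝ, 0 ≤ t → (scaleP (subst U φ) ω ξ).eval t ≤ C * (1 + t ^ N) := by
  rcases isEmpty_or_nonempty (Fin n) with hE | hE
  · refine ⟨|MvPolynomial.eval 0 φ|, fun t ht => ?_⟩
    rw [scaleP_eval, subst_eval, Finset.univ_eq_empty, Finset.sum_empty]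
    have h1 := le_abs_self (MvPolynomial.eval 0 φ)
    have h2 : 0 ≤ t ^ N := by positivity
    have h3 := abs_nonneg (MvPolynomial.eval 0 φ)
    nlinarith
  · have hn : 0 < (n : ℝ) := by
      have := Fintype.card_pos (α := Fin n); rw [Fintype.card_fin] at this; exact_mod_cast this
    choose C hC0 hC using fun b => poly_bound (lineP φ (U b))
    refine ⟨∑ b, (1 / (n : ℝ)) * (C b * (1 + |n * ξ b| ^ (lineP φ (U b)).natDegree)),
      fun t ht => ?_⟩
    rw [scaleP_eval, subst_eval]
    have h1 := hconv.map_sum_le (t := Finset.univ) (w := fun _ : Fin n => 1 / (n : ℝ))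
      (p := fun b => ((n : ℝ) * (t ^ ω b * ξ b)) • U b) (fun _ _ => by positivity)
      (by simp [hn.ne']) (fun _ _ => Set.mem_univ _)
    have e : ∑ b : Fin n, (1 / (n : ℝ)) • ((n : ℝ) * (t ^ ω b * ξ b)) • U b =
        ∑ b, (t ^ ω b * ξ b) • U b := by
      refine Finset.sum_congr rfl fun b _ => ?_
      rw [smul_smul]; congr 1; field_simp
    rw [e] at h1
    refine h1.trans ?_
    rw [Finset.sum_mul]
    refine Finset.sum_le_sum fun b _ => ?_
    rw [smul_eq_mul, mul_assoc]
    refine mul_le_mul_of_nonneg_left ?_ (by positivity)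
    rw [← lineP_eval]
    refine (le_abs_self _).trans ((hC b _).trans ?_)
    rw [mul_assoc]
    refine mul_le_mul_of_nonneg_left ?_ (hC0 b)
    have e2 : |(n : ℝ) * (t ^ ω b * ξ b)| ^ (lineP φ (U b)).natDegree =
        |n * ξ b| ^ (lineP φ (U b)).natDegree * t ^ N := by
      rw [← hD b, mul_comm (lineP φ (U b)).natDegree (ω b), pow_mul, ← mul_pow]
      congr 1
      rw [show (n : ℝ) * (t ^ ω b * ξ b) = (n * ξ b) * t ^ ω b by ring, abs_mul,
        abs_of_nonneg (pow_nonneg ht (ω b))]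
    rw [e2]
    have h3 : 0 ≤ t ^ N := by positivity
    have h4 : 0 ≤ |n * ξ b| ^ (lineP φ (U b)).natDegree := by positivity
    nlinarith

theorem scale_natDegree (φ : MvPolynomial (Fin n) ℝ)
    (hconv : ConvexOn ℝ Set.univ (fun x => MvPolynomial.eval x φ))
    (U : Matrix (Fin n) (Fin n) ℝ) (ω : Fin n → ℕ) (N : ℕ)
    (hD : ∀ b, (lineP φ (U b)).natDegree * ω b = N) (ξ : Fin n → ℝ) :
    (scaleP (subst U φ) ω ξ).natDegree ≤ N := by
  obtain ⟨C1, h1⟩ := scale_upper φ hconv U ω N hD ξ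
  obtain ⟨C2, h2⟩ := scale_upper φ hconv U ω N hD (-ξ)
  refine natDegree_le_of_bound _ N (|C1| + |C2| + 2 * |MvPolynomial.eval 0 φ|) fun t ht => ?_
  have h3 := h1 t ht
  have h4 := h2 t ht
  have h5 : 2 * MvPolynomial.eval 0 φ ≤ (scaleP (subst U φ) ω ξ).eval t +
      (scaleP (subst U φ) ω (-ξ)).eval t := by
    rw [scaleP_eval, scaleP_eval, subst_eval, subst_eval]
    have := hconv.2 (Set.mem_univ (∑ b, (t ^ ω b * ξ b) • U b))
      (Set.mem_univ (∑ b, (t ^ ω b * (-ξ) b) • U b)) (show (0 : ℝ) ≤ 1 / 2 by norm_num)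
      (show (0 : ℝ) ≤ 1 / 2 by norm_num) (by norm_num)
    have e : (1 / 2 : ℝ) • (∑ b, (t ^ ω b * ξ b) • U b) +
        (1 / 2 : ℝ) • (∑ b, (t ^ ω b * (-ξ) b) • U b) = 0 := by
      rw [← smul_add, ← Finset.sum_add_distrib]
      simp
    rw [e] at this
    simp only [smul_eq_mul] at this
    linarith
  have hp : 0 ≤ t ^ N := by positivity
  have a1 := le_abs_self C1
  have a2 := le_abs_self C2
  have a3 := neg_abs_le (MvPolynomial.eval 0 φ)
  have a4 := abs_nonneg C1
  have a5 := abs_nonneg C2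
  have a6 := abs_nonneg (MvPolynomial.eval 0 φ)
  rw [abs_le]
  constructor <;> nlinarith

theorem weighted_structure (φ : MvPolynomial (Fin n) ℝ)
    (hconv : ConvexOn ℝ Set.univ (fun x => MvPolynomial.eval x φ))
    (hdeg : ∀ v : Fin n → ℝ, v ≠ 0 → 2 ≤ (lineP φ v).natDegree) :
    ∃ (U : Matrix (Fin n) (Fin n) ℝ) (D ω : Fin n → ℕ) (N : ℕ), U.det ≠ 0 ∧ 0 < N ∧
      (∀ b, D b * ω b = N) ∧ (∀ α ∈ (subst U φ).support, ∑ b, α b * ω b ≤ N) ∧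
      ∀ a : Fin n → ℝ, a ≠ 0 → 0 < ∑ α ∈ (subst U φ).support,
        if ∑ b, α b * ω b = N then (subst U φ).coeff α * ∏ b, a b ^ α b else 0 := by
  classical
  obtain ⟨U, hU, hmin⟩ := exists_min_basis (fun v => (lineP φ v).natDegree)
  have hU0 : ∀ b, U b ≠ 0 := fun b h => hU (Matrix.det_eq_zero_of_row_eq_zero b (fun j => by
    rw [h]; rfl))
  set D : Fin n → ℕ := fun b => (lineP φ (U b)).natDegree with hDdef
  have hD2 : ∀ b, 2 ≤ D b := fun b => hdeg _ (hU0 b)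
  set N := ∏ b, D b with hN
  have hN0 : 0 < N := Finset.prod_pos fun b _ => by have := hD2 b; omega
  set ω : Fin n → ℕ := fun b => ∏ k ∈ Finset.univ.erase b, D k with hω
  have hDω : ∀ b, D b * ω b = N := fun b => Finset.mul_prod_erase _ _ (Finset.mem_univ b)
  set ψ := subst U φ with hψ
  have hnat : ∀ ξ, (scaleP ψ ω ξ).natDegree ≤ N := scale_natDegree φ hconv U ω N hDω
  refine ⟨U, D, ω, N, hU, hN0, hDω, ?_, ?_⟩
  · intro α hα
    by_contra hlt
    push Not at hlt
    set k := ∑ b, α b * ω b with hk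
    have hz : (∑ β ∈ ψ.support, if ∑ b, β b * ω b = k then
        MvPolynomial.monomial β (ψ.coeff β) else 0) = 0 := by
      apply MvPolynomial.funext
      intro ξ
      have h1 : (scaleP ψ ω ξ).coeff k = 0 :=
        Polynomial.coeff_eq_zero_of_natDegree_lt ((hnat ξ).trans_lt hlt)
      rw [scaleP_coeff] at h1
      rw [map_sum, map_zero, ← h1]
      refine Finset.sum_congr rfl fun β _ => ?_
      split_ifs
      · rw [MvPolynomial.eval_monomial, Finsupp.prod_fintype _ _ (fun i => pow_zero _)]
      · simp
    have h2 := congrArg (MvPolynomial.coeff α) hz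
    rw [MvPolynomial.coeff_sum, Finset.sum_eq_single α] at h2
    · rw [if_pos rfl, MvPolynomial.coeff_monomial, if_pos rfl, MvPolynomial.coeff_zero] at h2
      exact (MvPolynomial.mem_support_iff.mp hα) h2
    · intro β _ hβ
      split_ifs
      · rw [MvPolynomial.coeff_monomial, if_neg hβ]
      · simp
    · intro h; exact absurd hα h
  · intro a ha
    rw [← scaleP_coeff]
    by_contra hc
    push Not at hc
    have hlim : ∀ ξ, Tendsto (fun t => (scaleP ψ ω ξ).eval t / t ^ N) atTop
      (𝓝 ((scaleP ψ ω ξ).coeff N)) := fun ξ => tendsto_div_pow _ _ (hnat ξ)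
    have hcont : Continuous (fun ξ => (scaleP ψ ω ξ).coeff N) := by
      simp_rw [scaleP_coeff]
      refine continuous_finsetSum _ fun α _ => ?_
      split_ifs <;> fun_prop
    have hstar : ∀ (s : ℝ) (ξ : Fin n → ℝ), 0 ≤ s → s ≤ 1 →
        (scaleP ψ ω (s • ξ)).coeff N ≤ s * (scaleP ψ ω ξ).coeff N := by
      intro s ξ hs0 hs1
      have h1 : Tendsto (fun t : ℝ => s * ((scaleP ψ ω ξ).eval t / t ^ N) +
          (1 - s) * MvPolynomial.eval 0 φ * (t ^ 0 / t ^ N)) atTop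
          (𝓝 (s * (scaleP ψ ω ξ).coeff N + (1 - s) * MvPolynomial.eval 0 φ * 0)) :=
        ((hlim ξ).const_mul s).add ((tendsto_pow_div_pow_atTop_zero hN0).const_mul _)
      rw [mul_zero, add_zero] at h1
      refine le_of_tendsto_of_tendsto (hlim (s • ξ)) h1 ?_
      filter_upwards [eventually_gt_atTop 0] with t ht
      have h2 := hconv.2 (Set.mem_univ (∑ b, (t ^ ω b * ξ b) • U b))
        (Set.mem_univ (0 : Fin n → ℝ)) hs0 (sub_nonneg.mpr hs1) (by ring)
      have e : s • (∑ b, (t ^ ω b * ξ b) • U b) + (1 - s) • (0 : Fin n → ℝ) =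
          ∑ b, (t ^ ω b * (s • ξ) b) • U b := by
        rw [smul_zero, add_zero, Finset.smul_sum]
        refine Finset.sum_congr rfl fun b _ => ?_
        rw [smul_smul, Pi.smul_apply, smul_eq_mul]; congr 1; ring
      rw [e] at h2
      simp only [smul_eq_mul] at h2
      rw [scaleP_eval, scaleP_eval, hψ, subst_eval, subst_eval]
      rw [pow_zero, mul_div_assoc', mul_one_div, ← add_div]
      exact div_le_div_of_nonneg_right h2 (by positivity)
    -- the dominating index
    obtain ⟨b1, hb1⟩ : ∃ b, a b ≠ 0 := by
      by_contra h; push Not at h; exact ha (funext h)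
    obtain ⟨b0, hb0, hmax⟩ := Finset.exists_max_image (Finset.univ.filter fun b => a b ≠ 0) ω
      ⟨b1, by simp [hb1]⟩
    have hab0 : a b0 ≠ 0 := by simpa using hb0
    set c : Fin n → ℝ := fun b => if ω b = ω b0 then a b else 0 with hcdef
    have hct : Tendsto (fun t : ℝ => fun b => (1 / t ^ ω b0) * (t ^ ω b * a b)) atTop (𝓝 c) := by
      rw [tendsto_pi_nhds]
      intro b
      by_cases hab : a b = 0
      · have : c b = 0 := by simp [hcdef, hab]
        rw [this]; simp [hab]
      · have hle : ω b ≤ ω b0 := hmax b (by simp [hab])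
        rcases hle.eq_or_lt with h | h
        · have : c b = a b := by simp [hcdef, h]
          rw [this, h]
          refine tendsto_const_nhds.congr' ?_
          filter_upwards [eventually_gt_atTop 0] with t ht
          field_simp
        · have : c b = 0 * a b := by simp [hcdef, h.ne]
          rw [this]
          refine ((tendsto_pow_div_pow_atTop_zero h).mul_const (a b)).congr fun t => ?_
          ring
    have hHc : (scaleP ψ ω c).coeff N ≤ 0 := by
      refine le_of_tendsto (hcont.continuousAt.tendsto.comp hct) ?_
      filter_upwards [eventually_ge_atTop 1] with t ht
      have ht0 : 0 < t := by linarith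
      have h1 := hstar (1 / t ^ ω b0) (fun b => t ^ ω b * a b) (by positivity)
        (by rw [div_le_one (by positivity)]; exact one_le_pow₀ ht)
      have e1 : ((1 / t ^ ω b0) • fun b => t ^ ω b * a b) =
        fun b => (1 / t ^ ω b0) * (t ^ ω b * a b) := rfl
      rw [e1] at h1
      refine h1.trans ?_
      have e2 : (scaleP ψ ω (fun b => t ^ ω b * a b)).coeff N = t ^ N * (scaleP ψ ω a).coeff N := by
        rw [scaleP_coeff, scaleP_coeff, Finset.mul_sum]
        refine Finset.sum_congr rfl fun α _ => ?_
        split_ifs with hw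
        · simp_rw [mul_pow, Finset.prod_mul_distrib, ← pow_mul]
          rw [Finset.prod_pow_eq_pow_sum]
          have : ∑ b, ω b * α b = N := by rw [← hw]; exact Finset.sum_congr rfl fun b _ => mul_comm _ _
          rw [this]; ring
        · simp
      rw [e2]
      exact mul_nonpos_of_nonneg_of_nonpos (by positivity)
        (mul_nonpos_of_nonneg_of_nonpos (by positivity) hc)
    -- the direction
    set v : Fin n → ℝ := ∑ b, c b • U b with hv
    have hcb0 : c b0 ≠ 0 := by simpa [hcdef] using hab0
    have hdv : D b0 ≤ (lineP φ v).natDegree := hmin c b0 hcb0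
    have hlead := lead_pos_of_convex _ (lineP_convex φ hconv v) ((hD2 b0).trans hdv)
    have hω0 : ω b0 ≠ 0 := by
      intro h; have := hDω b0; rw [h, mul_zero] at this; omega
    have h1 := tendsto_div_pow (lineP φ v) _ le_rfl
    have h2 := (h1.comp (tendsto_pow_atTop (α := ℝ) hω0)).eventually
      (eventually_gt_nhds (show (lineP φ v).leadingCoeff / 2 < (lineP φ v).coeff _ by
        rw [Polynomial.coeff_natDegree]; linarith))
    have h3 : (lineP φ v).leadingCoeff / 2 ≤ (scaleP ψ ω c).coeff N := by
      refine ge_of_tendsto (hlim c) ?_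
      filter_upwards [h2, eventually_ge_atTop 1] with t ht ht1
      have ht0 : 0 < t := by linarith
      simp only [Function.comp_apply] at ht
      rw [lt_div_iff₀ (by positivity)] at ht
      have e : (scaleP ψ ω c).eval t = (lineP φ v).eval (t ^ ω b0) := by
        rw [scaleP_eval, hψ, subst_eval, lineP_eval, hv, Finset.smul_sum]
        congr 2
        refine Finset.sum_congr rfl fun b _ => ?_
        rw [smul_smul]
        by_cases h : ω b = ω b0
        · rw [h]
        · simp [hcdef, h]
      rw [e, le_div_iff₀ (by positivity)]
      refine le_trans ?_ ht.le
      refine mul_le_mul_of_nonneg_left ?_ (by linarith)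
      rw [← hDω b0, mul_comm (D b0), pow_mul]
      exact pow_le_pow_right₀ (one_le_pow₀ ht1) hdv
    linarith

/-- The sublevel set is finite over every ordered extension of the reals. -/
theorem finite_points (φ : MvPolynomial (Fin n) ℝ)
    (hconv : ConvexOn ℝ Set.univ (fun x => MvPolynomial.eval x φ))
    (hdeg : ∀ v : Fin n → ℝ, v ≠ 0 → 2 ≤ (lineP φ v).natDegree)
    {K : Type} [CommRing K] [LinearOrder K] [IsStrictOrderedRing K] (ι : ℝ →+* K)
    (x : Fin n → K) (hx : MvPolynomial.eval₂ ι x φ ≤ 0) (i : Fin n) : ∃ C : ℝ, |x i| ≤ ι C := by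
  obtain ⟨U, D, ω, N, hU, hN, hD, hmono, hpos⟩ := weighted_structure φ hconv hdeg
  set ξ : Fin n → K := fun b => ∑ k, ι (U⁻¹ k b) * x k with hξ
  have hxξ : (fun i => ∑ b, ι (U b i) * ξ b) = x := by
    ext i
    simp only [hξ, Finset.mul_sum]
    rw [Finset.sum_comm]
    have : ∀ k, ∑ b, ι (U b i) * (ι (U⁻¹ k b) * x k) = ι ((U⁻¹ * U) k i) * x k := by
      intro k
      rw [Matrix.mul_apply, map_sum, Finset.sum_mul]
      exact Finset.sum_congr rfl fun b _ => by rw [map_mul]; ring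
    simp_rw [this, Matrix.nonsing_inv_mul U (isUnit_iff_ne_zero.mpr hU), Matrix.one_apply]
    simp
  have h1 : MvPolynomial.eval₂ ι ξ (subst U φ) ≤ 0 := by rwa [subst_eval₂, hxξ]
  have h2 := finite_of_weighted (subst U φ) D ω N hN hD hmono hpos ξ h1
  choose C hC using h2
  refine ⟨∑ b, |U b i| * C b, ?_⟩
  rw [← congrFun hxξ i, map_sum]
  refine (Finset.abs_sum_le_sum_abs _ _).trans (Finset.sum_le_sum fun b _ => ?_)
  rw [abs_mul, iota_abs, map_mul]
  exact mul_le_mul_of_nonneg_left (hC b) (iota_nonneg ι (abs_nonneg _))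

end Struct2

end


section Core

theorem PreOrd.addIdeal {B : Type} [CommRing B] {T : Set B} (h : PreOrd T) (a : B) :
    PreOrd {x | ∃ p ∈ T, ∃ c : B, x = p + a * c} where
  add := by
    rintro x y ⟨p, hp, c, rfl⟩ ⟨q, hq, d, rfl⟩
    exact ⟨p + q, h.add hp hq, c + d, by ring⟩
  mul := by
    rintro x y ⟨p, hp, c, rfl⟩ ⟨q, hq, d, rfl⟩
    exact ⟨p * q, h.mul hp hq, p * d + c * q + a * c * d, by ring⟩
  sq := by
    intro x
    exact ⟨x * x, h.sq x, 0, by ring⟩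

theorem root_bound {K : Type} [CommRing K] [LinearOrder K] [IsStrictOrderedRing K]
    (c : ℕ → K) (N : ℕ) (D l : K) (hD : ∀ k, |c k| ≤ D)
    (h : l ^ N + ∑ k ∈ Finset.range N, c k * l ^ k = 0) : |l| ≤ 1 + N * D := by
  have hD0 : 0 ≤ D := (abs_nonneg _).trans (hD 0)
  by_contra hc
  push Not at hc
  have h1 : 1 ≤ |l| := by
    have : 0 ≤ (N : K) * D := by positivity
    linarith
  rcases N with _ | N
  · simp at h
  have e : |l| ^ (N + 1) ≤ (N + 1 : ℕ) * D * |l| ^ N := by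
    rw [← abs_pow]
    have : l ^ (N + 1) = - ∑ k ∈ Finset.range (N + 1), c k * l ^ k := by linear_combination h
    rw [this, abs_neg]
    refine (Finset.abs_sum_le_sum_abs _ _).trans ?_
    have : ∀ k ∈ Finset.range (N + 1), |c k * l ^ k| ≤ D * |l| ^ N := by
      intro k hk
      rw [abs_mul, abs_pow]
      have hk' : k ≤ N := by have := Finset.mem_range.mp hk; omega
      exact mul_le_mul (hD k) (pow_le_pow_right₀ h1 hk') (by positivity) hD0
    refine (Finset.sum_le_sum this).trans ?_
    simp [mul_assoc]
  rw [pow_succ'] at e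
  have hp : 0 < |l| ^ N := by positivity
  have := le_of_mul_le_mul_right e hp
  linarith

theorem eig_bound {n : ℕ} (M : Matrix (Fin n) (Fin n) ℝ) (l : ℝ)
    (h : M.charpoly.eval l = 0) (hpd : ∀ v : Fin n → ℝ, v ≠ 0 → 0 < ∑ i, ∑ j, v i * v j * M i j) :
    0 < l ∧ l ≤ ∑ i, ∑ j, |M i j| := by
  rw [Matrix.eval_charpoly] at h
  obtain ⟨v, hv, hv0⟩ := Matrix.exists_mulVec_eq_zero_iff.mpr h
  have hvi : ∀ i, ∑ j, M i j * v j = l * v i := by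
    intro i
    have := congrFun hv0 i
    rw [Matrix.sub_mulVec] at this
    simp only [Pi.sub_apply, Pi.zero_apply, sub_eq_zero, Matrix.scalar_apply,
      Matrix.mulVec_diagonal] at this
    rw [this]; rfl
  have hs : ∑ i, ∑ j, v i * v j * M i j = l * ∑ i, v i ^ 2 := by
    rw [Finset.mul_sum]
    refine Finset.sum_congr rfl fun i _ => ?_
    calc ∑ j, v i * v j * M i j = v i * ∑ j, M i j * v j := by
          rw [Finset.mul_sum]; exact Finset.sum_congr rfl fun j _ => by ring
      _ = _ := by rw [hvi]; ring
  have hq : 0 < ∑ i, v i ^ 2 := by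
    obtain ⟨i, hi⟩ := Function.ne_iff.mp hv
    exact Finset.sum_pos' (fun i _ => sq_nonneg _) ⟨i, Finset.mem_univ _, by
      have : v i ≠ 0 := hi
      positivity⟩
  have hl : 0 < l := by
    have := hpd v hv
    rw [hs] at this
    exact pos_of_mul_pos_left this hq.le
  refine ⟨hl, ?_⟩
  obtain ⟨i0, hi0⟩ := Function.ne_iff.mp hv
  obtain ⟨i, -, hi⟩ := Finset.exists_max_image Finset.univ (fun i => |v i|) ⟨i0, Finset.mem_univ _⟩
  have hp : 0 < |v i| := (abs_pos.mpr hi0).trans_le (hi i0 (Finset.mem_univ _))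
  have : l * |v i| ≤ (∑ j, |M i j|) * |v i| := by
    rw [← abs_of_pos hl, ← abs_mul, ← hvi, Finset.sum_mul]
    refine (Finset.abs_sum_le_sum_abs _ _).trans (Finset.sum_le_sum fun j _ => ?_)
    rw [abs_mul]
    exact mul_le_mul_of_nonneg_left (hi j (Finset.mem_univ _)) (abs_nonneg _)
  refine (le_of_mul_le_mul_right this hp).trans ?_
  exact Finset.single_le_sum (f := fun i => ∑ j, |M i j|)
    (fun i _ => Finset.sum_nonneg fun _ _ => abs_nonneg _) (Finset.mem_univ i)

theorem adjoin_top {n : ℕ} : Algebra.adjoin ℝ (Set.range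
    (fun o : Option (Fin n) => (o.elim Polynomial.X (fun i => Polynomial.C (MvPolynomial.X i)) :
      Polynomial (MvPolynomial (Fin n) ℝ)))) = ⊤ := by
  rw [eq_top_iff]
  rintro p -
  set S := Algebra.adjoin ℝ (Set.range
    (fun o : Option (Fin n) => (o.elim Polynomial.X (fun i => Polynomial.C (MvPolynomial.X i)) :
      Polynomial (MvPolynomial (Fin n) ℝ)))) with hS
  have hX : Polynomial.X ∈ S := Algebra.subset_adjoin ⟨none, rfl⟩
  have hC : ∀ q : MvPolynomial (Fin n) ℝ, Polynomial.C q ∈ S := by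
    intro q
    induction q using MvPolynomial.induction_on with
    | C a => exact S.algebraMap_mem a
    | add p q hp hq => rw [map_add]; exact S.add_mem hp hq
    | mul_X p i hp =>
      rw [map_mul]
      exact S.mul_mem hp (Algebra.subset_adjoin ⟨some i, rfl⟩)
  induction p using Polynomial.induction_on' with
  | add p q hp hq => exact S.add_mem hp hq
  | monomial k a =>
    rw [← Polynomial.C_mul_X_pow_eq_monomial]
    exact S.mul_mem (hC a) (S.pow_mem hX k)

end Core


section Bound

/-- The ultrapower of the reals. -/
abbrev HypR : Type := Filter.Germ (Filter.hyperfilter ℕ : Filter ℕ) ℝ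

theorem germ_eval {n : ℕ} (ι : ℝ →+* HypR) (hι : ∀ r : ℝ, ι r = ((fun _ => r : ℕ → ℝ) : HypR)) (x : ℕ → Fin n → ℝ) (φ : MvPolynomial (Fin n) ℝ) :
    MvPolynomial.eval₂ ι (fun i => ((fun k => x k i : ℕ → ℝ) : HypR)) φ
      = ((fun k => MvPolynomial.eval (x k) φ : ℕ → ℝ) : HypR) := by
  induction φ using MvPolynomial.induction_on with
  | C a => simp [hι]
  | add p q hp hq =>
    rw [MvPolynomial.eval₂_add, hp, hq]
    simp only [map_add]
    rfl
  | mul_X p i hp =>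
    rw [MvPolynomial.eval₂_mul, hp, MvPolynomial.eval₂_X]
    simp only [map_mul, MvPolynomial.eval_X]
    rfl

theorem sublevel_bounded {n : ℕ} (φ : MvPolynomial (Fin n) ℝ)
    (hconv : ConvexOn ℝ Set.univ (fun x => MvPolynomial.eval x φ))
    (hdeg : ∀ v : Fin n → ℝ, v ≠ 0 → 2 ≤ (lineP φ v).natDegree) :
    ∃ R : ℝ, 0 ≤ R ∧ ∀ x, MvPolynomial.eval x φ ≤ 0 → ‖x‖ ≤ R := by
  by_contra hc
  push Not at hc
  choose x hx hx' using fun k : ℕ => hc k (Nat.cast_nonneg k)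
  let ι : ℝ →+* HypR := 
    { toFun := fun r => ((fun _ => r : ℕ → ℝ) : HypR)
      map_one' := rfl
      map_zero' := rfl
      map_add' := fun _ _ => rfl
      map_mul' := fun _ _ => rfl }
  have hι : ∀ r : ℝ, ι r = ((fun _ => r : ℕ → ℝ) : HypR) := fun _ => rfl
  have h1 := germ_eval ι hι x φ
  have h2 := finite_points φ hconv hdeg ι
    (fun i => ((fun k => x k i : ℕ → ℝ) : HypR)) (by
      rw [h1]
      exact Filter.Germ.coe_le.mpr (Filter.Eventually.of_forall hx))
  choose C hC using h2
  have h3 : ∀ i, ∀ᶠ k in (Filter.hyperfilter ℕ : Filter ℕ), |x k i| ≤ C i := by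
    intro i
    have := abs_le.mp (hC i)
    have ha : ∀ᶠ k in (Filter.hyperfilter ℕ : Filter ℕ), - C i ≤ x k i := by
      have h := this.1
      rw [hι] at h
      exact Filter.Germ.coe_le.mp h
    have hb : ∀ᶠ k in (Filter.hyperfilter ℕ : Filter ℕ), x k i ≤ C i := by
      have h := this.2
      rw [hι] at h
      exact Filter.Germ.coe_le.mp h
    filter_upwards [ha, hb] with k h h' using abs_le.mpr ⟨h, h'⟩
  have h4 := Filter.eventually_all.mpr h3
  obtain ⟨N, hN⟩ := exists_nat_ge (∑ i, |C i|)
  have h5 : ∀ᶠ k in (Filter.hyperfilter ℕ : Filter ℕ), N ≤ k :=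
    Nat.hyperfilter_le_atTop (Filter.eventually_ge_atTop N)
  obtain ⟨k, hk, hk'⟩ := (h4.and h5).exists
  have : ‖x k‖ ≤ N := by
    rw [pi_norm_le_iff_of_nonneg (Nat.cast_nonneg N)]
    intro i
    rw [Real.norm_eq_abs]
    refine (hk i).trans ((le_abs_self _).trans (le_trans ?_ hN))
    exact Finset.single_le_sum (f := fun i => |C i|) (fun i _ => abs_nonneg _) (Finset.mem_univ i)
  have h6 := hx' k
  have : (N : ℝ) ≤ k := by exact_mod_cast hk'
  linarith

end Bound

section Core2

theorem quad_sos {n : ℕ} (A : Matrix (Fin n) (Fin n) (MvPolynomial (Fin n) ℝ))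
    (hA : A.transpose = A) (u : Fin n → MvPolynomial (Fin n) ℝ)
    (s : Polynomial (MvPolynomial (Fin n) ℝ)) (hs : IsSumSq s) :
    IsSumSq (u ⬝ᵥ ((Polynomial.aeval A s).mulVec u)) := by
  induction hs with
  | zero => simp
  | @sq_add a s hs ih =>
    rw [map_add, Matrix.add_mulVec, dotProduct_add]
    refine IsSumSq.add ?_ ih
    rw [map_mul]
    have hsym : (Polynomial.aeval A a).transpose = Polynomial.aeval A a := by
      have hpow : ∀ k : ℕ, (A ^ k).transpose = A ^ k := fun k => by rw [Matrix.transpose_pow, hA]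
      rw [Polynomial.aeval_eq_sum_range, Matrix.transpose_sum]
      exact Finset.sum_congr rfl fun k _ => by rw [Matrix.transpose_smul, hpow]
    rw [← Matrix.mulVec_mulVec, Matrix.dotProduct_mulVec, ← Matrix.mulVec_transpose, hsym]
    unfold dotProduct
    exact IsSumSq.sum fun i _ => IsSumSq.mul_self _

theorem core {n : ℕ} (φ : MvPolynomial (Fin n) ℝ)
    (hconv : ConvexOn ℝ Set.univ (fun x => MvPolynomial.eval x φ))
    (hdeg : ∀ v : Fin n → ℝ, v ≠ 0 → 2 ≤ (lineP φ v).natDegree)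
    (A : Matrix (Fin n) (Fin n) (MvPolynomial (Fin n) ℝ)) (hA : A.transpose = A)
    (hpd : ∀ x, MvPolynomial.eval x φ ≤ 0 → ∀ v : Fin n → ℝ, v ≠ 0 →
      0 < ∑ i, ∑ j, v i * v j * MvPolynomial.eval x (A i j)) :
    ∃ σ σ₀ : MvPolynomial (Fin n) ℝ, IsSumSq σ ∧ IsSumSq σ₀ ∧
      MvPolynomial.X ⬝ᵥ (A.mulVec MvPolynomial.X) + σ * φ = σ₀ := by
  obtain ⟨R₀, hR₀, hbd⟩ := sublevel_bounded φ hconv hdeg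
  -- uniform bound on eigenvalues
  have hcont : Continuous fun x : Fin n → ℝ => ∑ i, ∑ j, |MvPolynomial.eval x (A i j)| := by
    refine continuous_finsetSum _ fun i _ => continuous_finsetSum _ fun j _ => ?_
    exact (MvPolynomial.continuous_eval _).abs
  obtain ⟨E, hE⟩ := (isCompact_closedBall (0 : Fin n → ℝ) R₀).bddAbove_image hcont.continuousOn
  have hE' : ∀ x, MvPolynomial.eval x φ ≤ 0 →
      ∑ i, ∑ j, |MvPolynomial.eval x (A i j)| ≤ E := by
    intro x hx
    exact hE ⟨x, by simpa using hbd x hx, rfl⟩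
  let B := Polynomial (MvPolynomial (Fin n) ℝ)
  let T0 : Set B := {x | ∃ p ∈ {b : B | IsSumSq b}, ∃ q ∈ {b : B | IsSumSq b},
    x = p + (Polynomial.C (-φ)) * q}
  have hT0 : PreOrd T0 := PreOrd.sumSq.adjoin (Polynomial.C (-φ))
  let T : Set B := {x | ∃ p ∈ T0, ∃ c : B, x = p + A.charpoly * c}
  have hT : PreOrd T := hT0.addIdeal A.charpoly
  have hφT : Polynomial.C (-φ) ∈ T :=
    ⟨Polynomial.C (-φ), ⟨0, IsSumSq.zero, 1, IsSumSq.one, by ring⟩, 0,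
      by ring⟩
  have hχT : A.charpoly ∈ T := ⟨0, hT0.zero, 1, by ring⟩
  have hχT' : -A.charpoly ∈ T := ⟨0, hT0.zero, -1, by ring⟩
  obtain ⟨R, hRdef⟩ : ∃ R : ℝ, R = n * R₀ ^ 2 + E ^ 2 + 1 := ⟨_, rfl⟩
  have hR : 0 ≤ R := by rw [hRdef]; positivity
  let gen : Option (Fin n) → B := fun o =>
    o.elim Polynomial.X (fun i => Polynomial.C (MvPolynomial.X i))
  have key : ∀ (K : Type) [CommRing K] [LinearOrder K] [IsStrictOrderedRing K] (ρ : B →+* K),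
      (∀ t ∈ T, 0 ≤ ρ t) →
      0 < ρ (algebraMap ℝ B R - ∑ i, gen i * gen i) ∧ 0 < ρ Polynomial.X := by
    intro K _ _ _ ρ hρ
    let ι : ℝ →+* K := ρ.comp (algebraMap ℝ B)
    let x : Fin n → K := fun i => ρ (Polynomial.C (MvPolynomial.X i))
    have hev : ∀ q : MvPolynomial (Fin n) ℝ, ρ (Polynomial.C q) = MvPolynomial.eval₂ ι x q := by
      intro q
      have : (ρ.comp Polynomial.C) = MvPolynomial.eval₂Hom ι x := by
        apply MvPolynomial.ringHom_ext
        · intro r; simp [ι]; rfl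
        · intro i; simp [x]
      exact congrArg (fun f => f q) this
    have hφ : MvPolynomial.eval₂ ι x φ ≤ 0 := by
      have := hρ _ hφT
      rw [map_neg, map_neg, hev] at this
      linarith
    have hfin := finite_points φ hconv hdeg ι x hφ
    have hnear : ∀ i, ∃ r, Near ι 1 (x i) r := by
      intro i
      obtain ⟨C, hC⟩ := hfin i
      exact near_exists zero_lt_one (by simpa using hC)
    choose xb hxb using hnear
    have hφb : MvPolynomial.eval xb φ ≤ 0 := by
      have h1 := near_neg zero_le_one (near_eval hxb φ)
      have := near_nonneg zero_lt_one h1 (by linarith)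
      linarith
    have hχ0 : ρ A.charpoly = 0 := by
      have h1 := hρ _ hχT
      have h2 := hρ _ hχT'
      rw [map_neg] at h2
      linarith
    set l : K := ρ Polynomial.X with hl
    have hmonic := A.charpoly_monic
    have hdegA : A.charpoly.natDegree = n := by simpa using A.charpoly_natDegree_eq_dim
    have hsum : l ^ n + ∑ k ∈ Finset.range n,
        MvPolynomial.eval₂ ι x (A.charpoly.coeff k) * l ^ k = 0 := by
      have h1 := hχ0
      rw [hmonic.as_sum, hdegA, map_add, map_pow, map_sum] at h1
      rw [← h1]
      congr 1
      exact Finset.sum_congr rfl fun k _ => by rw [map_mul, map_pow, hev]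
    have hlfin : ∃ C : ℝ, |l| ≤ ι C * 1 := by
      let D : ℝ := ∑ k ∈ Finset.range n, (|MvPolynomial.eval xb (A.charpoly.coeff k)| + 1)
      have hc : ∀ k ∈ Finset.range n, |MvPolynomial.eval₂ ι x (A.charpoly.coeff k)| ≤ ι D := by
        intro k hk
        have h1 := near_bound zero_le_one (near_eval hxb (A.charpoly.coeff k))
        rw [mul_one] at h1
        refine h1.trans (iota_mono ι ?_)
        exact Finset.single_le_sum
          (f := fun k => |MvPolynomial.eval xb (A.charpoly.coeff k)| + 1)
          (fun k _ => by positivity) hk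
      have hD : 0 ≤ ι D := iota_nonneg ι (Finset.sum_nonneg fun k _ => by positivity)
      have := root_bound
        (fun k => if k ∈ Finset.range n then MvPolynomial.eval₂ ι x (A.charpoly.coeff k) else 0)
        n (ι D) l (by
          intro k
          by_cases hk : k ∈ Finset.range n
          · rw [if_pos hk]; exact hc k hk
          · rw [if_neg hk, abs_zero]; exact hD) (by
          rw [← hsum]
          congr 1
          exact Finset.sum_congr rfl fun k hk => by rw [if_pos hk])
      refine ⟨1 + n * D, ?_⟩
      rw [mul_one, map_add, map_mul, map_one, map_natCast]
      exact this
    obtain ⟨C, hC⟩ := hlfin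
    obtain ⟨lb, hlb⟩ := near_exists zero_lt_one hC
    have hroot : (A.map (MvPolynomial.eval xb)).charpoly.eval lb = 0 := by
      have e : (A.map (MvPolynomial.eval xb)).charpoly = A.charpoly.map (MvPolynomial.eval xb) :=
        Matrix.charpoly_map _ _
      rw [e, hmonic.as_sum, hdegA]
      simp only [Polynomial.map_add, Polynomial.map_pow, Polynomial.map_X, Polynomial.map_sum,
        Polynomial.map_mul, Polynomial.map_C, Polynomial.eval_add, Polynomial.eval_pow,
        Polynomial.eval_X, Polynomial.eval_finsetSum, Polynomial.eval_mul, Polynomial.eval_C]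
      have hp : ∀ k : ℕ, Near ι 1 (l ^ k) (lb ^ k) := fun k => by
        simpa using near_pow zero_le_one hlb k
      have h1 := near_add (hp n) (near_sum zero_le_one (Finset.range n)
        (fun k => MvPolynomial.eval₂ ι x (A.charpoly.coeff k) * l ^ k)
        (fun k => MvPolynomial.eval xb (A.charpoly.coeff k) * lb ^ k) (fun k _ => by
          simpa using near_mul zero_le_one zero_le_one (near_eval hxb (A.charpoly.coeff k)) (hp k)))
      rw [hsum] at h1
      exact near_unique zero_lt_one h1 (near_zero zero_le_one)
    obtain ⟨hlpos, hlE⟩ := eig_bound _ lb hroot (fun v hv => hpd xb hφb v hv)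
    refine ⟨?_, near_pos zero_lt_one hlb hlpos⟩
    have hlE' : lb ≤ E := hlE.trans (hE' xb hφb)
    have hxR : ∀ i, |xb i| ≤ R₀ := fun i => (norm_le_pi_norm xb i).trans (hbd xb hφb)
    have h1 : Near ι 1 (ρ (algebraMap ℝ B R - ∑ i, gen i * gen i))
        (R + -(lb * lb + ∑ i, xb i * xb i)) := by
      have e : ρ (algebraMap ℝ B R - ∑ i, gen i * gen i) = ι R + -(l * l + ∑ i, x i * x i) := by
        rw [Fintype.sum_option, RingHom.map_sub, RingHom.map_add, map_sum, sub_eq_add_neg]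
        simp only [gen, map_mul, Option.elim]
        rfl
      rw [e]
      refine near_add (near_const R) (near_neg zero_le_one (near_add ?_ ?_))
      · simpa using near_mul zero_le_one zero_le_one hlb hlb
      · exact near_sum zero_le_one _ _ _ fun i _ => by
          simpa using near_mul zero_le_one zero_le_one (hxb i) (hxb i)
    refine near_pos zero_lt_one h1 ?_
    have h2 : ∑ i, xb i * xb i ≤ n * R₀ ^ 2 := by
      calc ∑ i, xb i * xb i ≤ ∑ _i : Fin n, R₀ ^ 2 := Finset.sum_le_sum fun i _ => by
            have := sq_le_sq' (by linarith [abs_le.mp (hxR i)]) (abs_le.mp (hxR i)).2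
            nlinarith
        _ = n * R₀ ^ 2 := by simp
    have h3 : lb * lb ≤ E ^ 2 := by nlinarith
    rw [hRdef]
    linarith
  have harch := hT.archimedean gen adjoin_top R hR
    (hT.abstract_pos _ fun K _ _ _ ρ hρ => (key K ρ hρ).1)
  have hX := hT.mem_of_cert harch Polynomial.X
    (hT.abstract_pos _ fun K _ _ _ ρ hρ => (key K ρ hρ).2)
  obtain ⟨p, ⟨s1, hs1, s2, hs2, rfl⟩, c, hc⟩ := hX
  have e := congrArg (Polynomial.aeval A) hc
  rw [Polynomial.aeval_X, map_add, map_mul, Matrix.aeval_self_charpoly, zero_mul, add_zero,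
    map_add, map_mul, Polynomial.aeval_C] at e
  refine ⟨_, _, quad_sos A hA MvPolynomial.X s2 hs2, quad_sos A hA MvPolynomial.X s1 hs1, ?_⟩
  have e2 := congrArg (fun M : Matrix (Fin n) (Fin n) (MvPolynomial (Fin n) ℝ) =>
    (MvPolynomial.X : Fin n → MvPolynomial (Fin n) ℝ) ⬝ᵥ (M.mulVec MvPolynomial.X)) e
  rw [e2]
  rw [Algebra.algebraMap_eq_smul_one, smul_mul_assoc, one_mul, Matrix.add_mulVec, dotProduct_add,
    Matrix.smul_mulVec, dotProduct_smul, smul_eq_mul]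
  ring

end Core2


section Calc

variable {n : ℕ}

/-- Directional derivative of a polynomial. -/
noncomputable def dP (v : Fin n → ℝ) (P : MvPolynomial (Fin n) ℝ) : MvPolynomial (Fin n) ℝ :=
  ∑ i, MvPolynomial.C (v i) * MvPolynomial.pderiv i P

theorem dP_add (v : Fin n → ℝ) (P Q : MvPolynomial (Fin n) ℝ) : dP v (P + Q) = dP v P + dP v Q := by
  simp [dP, mul_add, Finset.sum_add_distrib]

theorem dP_sum (v : Fin n → ℝ) {α : Type*} (s : Finset α) (P : α → MvPolynomial (Fin n) ℝ) :
    dP v (∑ a ∈ s, P a) = ∑ a ∈ s, dP v (P a) := by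
  simp only [dP, map_sum, Finset.mul_sum]
  rw [Finset.sum_comm]

theorem dP_C (v : Fin n → ℝ) (c : ℝ) : dP v (MvPolynomial.C c) = 0 := by simp [dP]

theorem dP_C_mul (v : Fin n → ℝ) (c : ℝ) (P : MvPolynomial (Fin n) ℝ) :
    dP v (MvPolynomial.C c * P) = MvPolynomial.C c * dP v P := by
  simp only [dP, MvPolynomial.pderiv_C_mul, Finset.mul_sum]
  exact Finset.sum_congr rfl fun i _ => by ring

theorem dP_mul (v : Fin n → ℝ) (P Q : MvPolynomial (Fin n) ℝ) :
    dP v (P * Q) = dP v P * Q + P * dP v Q := by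
  simp only [dP, MvPolynomial.pderiv_mul, Finset.mul_sum, Finset.sum_mul]
  rw [← Finset.sum_add_distrib]
  exact Finset.sum_congr rfl fun i _ => by ring

theorem dP_X (v : Fin n → ℝ) (i : Fin n) : dP v (MvPolynomial.X i) = MvPolynomial.C (v i) := by
  simp only [dP, MvPolynomial.pderiv_X]
  rw [Finset.sum_eq_single i]
  · simp
  · intro b _ hb; rw [Pi.single_eq_of_ne hb.symm]; simp
  · simp

theorem hasDerivAt_line (P : MvPolynomial (Fin n) ℝ) (x v : Fin n → ℝ) (t : ℝ) :
    HasDerivAt (fun t : ℝ => MvPolynomial.eval (x + t • v) P)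
      (MvPolynomial.eval (x + t • v) (dP v P)) t := by
  induction P using MvPolynomial.induction_on with
  | C a => simpa [dP_C] using hasDerivAt_const t a
  | add p q hp hq =>
    simp only [dP_add, map_add]
    exact hp.add hq
  | mul_X p i hp =>
    have h1 : HasDerivAt (fun t : ℝ => x i + t * v i) (v i) t := by
      simpa using ((hasDerivAt_id t).mul_const (v i)).const_add (x i)
    have := hp.mul h1
    simp only [dP_mul, dP_X, map_add, map_mul, MvPolynomial.eval_X, MvPolynomial.eval_C]
    exact this

theorem contDiff_eval (P : MvPolynomial (Fin n) ℝ) :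
    ContDiff ℝ 2 (fun x : Fin n → ℝ => MvPolynomial.eval x P) := by
  induction P using MvPolynomial.induction_on with
  | C a => simpa using contDiff_const
  | add p q hp hq => simpa using hp.add hq
  | mul_X p i hp =>
    simpa using hp.mul (contDiff_apply ℝ ℝ i)

theorem fderiv_eval (P : MvPolynomial (Fin n) ℝ) (x v : Fin n → ℝ) :
    fderiv ℝ (fun x : Fin n → ℝ => MvPolynomial.eval x P) x v = MvPolynomial.eval x (dP v P) := by
  have h := ((contDiff_eval P).differentiable (by norm_num) x).hasFDerivAt
  have h1 : HasDerivAt (fun t : ℝ => x + t • v) v 0 := by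
    simpa using ((hasDerivAt_id (0 : ℝ)).smul_const v).const_add x
  have h2 : HasDerivAt (fun t : ℝ => MvPolynomial.eval (x + t • v) P)
      (fderiv ℝ (fun x : Fin n → ℝ => MvPolynomial.eval x P) x v) 0 := by
    have h' : HasFDerivAt (fun x : Fin n → ℝ => MvPolynomial.eval x P)
      (fderiv ℝ (fun x : Fin n → ℝ => MvPolynomial.eval x P) x) (x + (0 : ℝ) • v) := by
      simpa using h
    exact h'.comp_hasDerivAt (0 : ℝ) h1
  have h3 := h2.unique (hasDerivAt_line P x v 0)
  simpa using h3

theorem iteratedFDeriv_eval (P : MvPolynomial (Fin n) ℝ) (x v : Fin n → ℝ) :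
    iteratedFDeriv ℝ 2 (fun x : Fin n → ℝ => MvPolynomial.eval x P) x ![v, v] =
      MvPolynomial.eval x (dP v (dP v P)) := by
  rw [iteratedFDeriv_two_apply]
  simp only [Matrix.cons_val_zero, Matrix.cons_val_one]
  have hd : DifferentiableAt ℝ (fderiv ℝ (fun x : Fin n → ℝ => MvPolynomial.eval x P)) x :=
    ((contDiff_eval P).fderiv_right (m := 1) (by norm_num)).differentiable (by norm_num) x
  have e : (fun y => fderiv ℝ (fun x : Fin n → ℝ => MvPolynomial.eval x P) y v) =
      fun y => MvPolynomial.eval y (dP v P) := by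
    funext y; exact fderiv_eval P y v
  have h1 := (hd.hasFDerivAt.clm_apply (hasFDerivAt_const v x)).fderiv
  have h2 := congrArg (fun L => L v) h1
  rw [e] at h2
  simp only [fderiv_eval] at h2
  rw [h2]
  simp

theorem hess_nonneg (P : MvPolynomial (Fin n) ℝ)
    (hconv : ConvexOn ℝ Set.univ (fun x => MvPolynomial.eval x P)) (x v : Fin n → ℝ) :
    0 ≤ MvPolynomial.eval x (dP v (dP v P)) := by
  have hc : ConvexOn ℝ Set.univ (fun t : ℝ => MvPolynomial.eval (x + t • v) P) := by
    have := hconv.comp_affineMap (AffineMap.lineMap x (x + v) : ℝ →ᵃ[ℝ] (Fin n → ℝ))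
    rw [Set.preimage_univ] at this
    have e : (fun t : ℝ => MvPolynomial.eval (x + t • v) P) =
        (fun x => MvPolynomial.eval x P) ∘ (AffineMap.lineMap x (x + v) : ℝ →ᵃ[ℝ] (Fin n → ℝ)) := by
      funext t
      simp [AffineMap.lineMap_apply, add_comm]
    rw [e]
    exact this
  have hm := hc.monotoneOn_deriv (fun t _ => (hasDerivAt_line P x v t).differentiableAt)
  have e : deriv (fun t : ℝ => MvPolynomial.eval (x + t • v) P) =
      fun t => MvPolynomial.eval (x + t • v) (dP v P) := by
    funext t; exact (hasDerivAt_line P x v t).deriv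
  rw [e, monotoneOn_univ] at hm
  have h2 := (hasDerivAt_line (dP v P) x v 0).deriv
  have := hm.deriv_nonneg (x := (0 : ℝ))
  rw [h2] at this
  simpa using this

theorem crit_zero (P : MvPolynomial (Fin n) ℝ) (x v : Fin n → ℝ)
    (h : ∀ y, MvPolynomial.eval x P ≤ MvPolynomial.eval y P) :
    MvPolynomial.eval x (dP v P) = 0 := by
  have hl : IsLocalMin (fun t : ℝ => MvPolynomial.eval (x + t • v) P) 0 := by
    refine Filter.Eventually.of_forall fun t => ?_
    simpa using h _
  simpa using hl.hasDerivAt_eq_zero (hasDerivAt_line P x v 0)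

theorem lineP_deg (P : MvPolynomial (Fin n) ℝ) (v : Fin n → ℝ)
    (h : 0 < MvPolynomial.eval 0 (dP v (dP v P))) : 2 ≤ (lineP P v).natDegree := by
  by_contra hc
  have h1 : ∀ Q : MvPolynomial (Fin n) ℝ, (lineP Q v).derivative = lineP (dP v Q) v := by
    intro Q
    apply Polynomial.funext
    intro t
    have a := (lineP Q v).hasDerivAt t
    have b := hasDerivAt_line Q 0 v t
    simp only [zero_add, ← lineP_eval] at b
    exact a.unique b
  have h2 : (lineP P v).derivative.derivative = 0 := by
    have := Polynomial.iterate_derivative_eq_zero (p := lineP P v) (x := 2) (by omega)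
    simpa using this
  rw [h1, h1] at h2
  have h3 := lineP_eval (dP v (dP v P)) v 0
  rw [h2, zero_smul] at h3
  simp at h3
  simp [← h3] at h

end Calc

section Fact

variable {n : ℕ}

theorem dP_dP (v : Fin n → ℝ) (P : MvPolynomial (Fin n) ℝ) (x : Fin n → ℝ) :
    MvPolynomial.eval x (dP v (dP v P)) = ∑ i, ∑ j, v i * v j *
      MvPolynomial.eval x (MvPolynomial.pderiv i (MvPolynomial.pderiv j P)) := by
  simp only [dP, map_sum, map_mul, MvPolynomial.eval_C, MvPolynomial.pderiv_C_mul, Finset.mul_sum,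
    mul_assoc]

theorem eval_hom (P : MvPolynomial (Fin n) ℝ) (k : ℕ) (h : P.IsHomogeneous k) (t : ℝ)
    (x : Fin n → ℝ) : MvPolynomial.eval (t • x) P = t ^ k * MvPolynomial.eval x P := by
  rw [MvPolynomial.eval_eq', MvPolynomial.eval_eq', Finset.mul_sum]
  refine Finset.sum_congr rfl fun d hd => ?_
  have hk : ∑ i, d i = k := by
    have := h (MvPolynomial.mem_support_iff.mp hd)
    rw [← this, Finsupp.weight_apply, Finsupp.sum_fintype] <;> simp
  simp only [Pi.smul_apply, smul_eq_mul, mul_pow, Finset.prod_mul_distrib, Finset.prod_pow_eq_pow_sum,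
    hk]
  ring

theorem pderiv_comm' (i j : Fin n) (P : MvPolynomial (Fin n) ℝ) :
    MvPolynomial.pderiv i (MvPolynomial.pderiv j P) =
      MvPolynomial.pderiv j (MvPolynomial.pderiv i P) := by
  ext d
  simp only [MvPolynomial.coeff_pderiv]
  rw [add_right_comm]
  rcases eq_or_ne i j with rfl | hij
  · rfl
  · simp [hij, hij.symm]
    ring

/-- Matrix factor of a polynomial vanishing to second order. -/
noncomputable def facA (P : MvPolynomial (Fin n) ℝ) :
    Matrix (Fin n) (Fin n) (MvPolynomial (Fin n) ℝ) := fun i j =>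
  ∑ k ∈ Finset.range (P.totalDegree + 1), MvPolynomial.C (1 / ((k : ℝ) * ((k : ℝ) - 1))) *
    MvPolynomial.pderiv i (MvPolynomial.pderiv j (MvPolynomial.homogeneousComponent k P))

theorem facA_symm (P : MvPolynomial (Fin n) ℝ) : (facA P).transpose = facA P := by
  ext1 i j
  simp only [Matrix.transpose_apply, facA]
  exact Finset.sum_congr rfl fun k _ => by rw [pderiv_comm']

theorem euler2 (P : MvPolynomial (Fin n) ℝ) (k : ℕ) (h : P.IsHomogeneous k) :
    ∑ i, ∑ j, (MvPolynomial.X i : MvPolynomial (Fin n) ℝ) * (MvPolynomial.X j *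
      MvPolynomial.pderiv i (MvPolynomial.pderiv j P)) =
      MvPolynomial.C ((k : ℝ) * ((k : ℝ) - 1)) * P := by
  have h1 : ∀ j, ∑ i, (MvPolynomial.X i : MvPolynomial (Fin n) ℝ) *
      MvPolynomial.pderiv i (MvPolynomial.pderiv j P) =
      MvPolynomial.C ((k : ℝ) - 1) * MvPolynomial.pderiv j P := by
    intro j
    rw [h.pderiv.sum_X_mul_pderiv]
    rcases k with _ | k
    · have : P = MvPolynomial.C (P.coeff 0) := by
        rwa [← MvPolynomial.totalDegree_zero_iff_isHomogeneous,
          MvPolynomial.totalDegree_eq_zero_iff_eq_C] at h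
      rw [this]; simp
    · simp [nsmul_eq_mul]
  rw [Finset.sum_comm]
  calc _ = ∑ j, (MvPolynomial.X j : MvPolynomial (Fin n) ℝ) * ∑ i, MvPolynomial.X i *
      MvPolynomial.pderiv i (MvPolynomial.pderiv j P) := by
        refine Finset.sum_congr rfl fun j _ => ?_
        rw [Finset.mul_sum]
        exact Finset.sum_congr rfl fun i _ => by ring
    _ = MvPolynomial.C ((k : ℝ) - 1) * ∑ j, (MvPolynomial.X j : MvPolynomial (Fin n) ℝ) *
        MvPolynomial.pderiv j P := by
        rw [Finset.mul_sum]
        exact Finset.sum_congr rfl fun j _ => by rw [h1]; ring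
    _ = _ := by
        rw [h.sum_X_mul_pderiv, nsmul_eq_mul, map_mul, MvPolynomial.C_eq_coe_nat]
        ring

theorem hom_one_zero (P : MvPolynomial (Fin n) ℝ)
    (h1 : ∀ i, MvPolynomial.eval 0 (MvPolynomial.pderiv i P) = 0) :
    MvPolynomial.homogeneousComponent 1 P = 0 := by
  have hc : ∀ i, P.coeff (Finsupp.single i 1) = 0 := by
    intro i
    have := h1 i
    rw [MvPolynomial.eval_zero, MvPolynomial.constantCoeff_eq, MvPolynomial.coeff_pderiv] at this
    simpa using this
  ext d
  rw [MvPolynomial.coeff_homogeneousComponent]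
  split_ifs with hd
  · have : ∃ i, d = Finsupp.single i 1 := by
      have hne : d ≠ 0 := by rintro rfl; simp at hd
      obtain ⟨i, hi⟩ := Finsupp.ne_iff.mp hne
      refine ⟨i, ?_⟩
      have hle : Finsupp.single i 1 ≤ d := by
        rw [Finsupp.single_le_iff]; simp at hi; omega
      obtain ⟨e, rfl⟩ := exists_add_of_le hle
      rw [map_add, Finsupp.degree_single] at hd
      have : e = 0 := by rw [← Finsupp.degree_eq_zero_iff]; omega
      simp [this]
    obtain ⟨i, rfl⟩ := this
    simpa using hc i
  · simp

theorem facA_eq (P : MvPolynomial (Fin n) ℝ) (h0 : MvPolynomial.eval 0 P = 0)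
    (h1 : ∀ i, MvPolynomial.eval 0 (MvPolynomial.pderiv i P) = 0) :
    (MvPolynomial.X : Fin n → MvPolynomial (Fin n) ℝ) ⬝ᵥ ((facA P).mulVec MvPolynomial.X) = P := by
  have e : (MvPolynomial.X : Fin n → MvPolynomial (Fin n) ℝ) ⬝ᵥ ((facA P).mulVec MvPolynomial.X) =
      ∑ k ∈ Finset.range (P.totalDegree + 1), MvPolynomial.C (1 / ((k : ℝ) * ((k : ℝ) - 1))) *
        ∑ i, ∑ j, (MvPolynomial.X i : MvPolynomial (Fin n) ℝ) * (MvPolynomial.X j *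
      MvPolynomial.pderiv i (MvPolynomial.pderiv j (MvPolynomial.homogeneousComponent k P))) := by
    simp only [dotProduct, Matrix.mulVec, facA, Finset.mul_sum, Finset.sum_mul]
    conv_rhs => rw [Finset.sum_comm]
    refine Finset.sum_congr rfl fun i _ => ?_
    conv_rhs => rw [Finset.sum_comm]
    refine Finset.sum_congr rfl fun j _ => Finset.sum_congr rfl fun k _ => ?_
    ring
  rw [e]
  conv_rhs => rw [← MvPolynomial.sum_homogeneousComponent P]
  refine Finset.sum_congr rfl fun k _ => ?_
  rw [euler2 _ k (MvPolynomial.homogeneousComponent_isHomogeneous k P), ← mul_assoc, ← map_mul]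
  rcases Nat.lt_or_ge k 2 with hk | hk
  · have : MvPolynomial.homogeneousComponent k P = 0 := by
      interval_cases k
      · rw [MvPolynomial.homogeneousComponent_zero, ← MvPolynomial.constantCoeff_eq,
          ← MvPolynomial.eval_zero, h0, map_zero]
      · exact hom_one_zero P h1
    rw [this, mul_zero]
  · have : (1 / ((k : ℝ) * ((k : ℝ) - 1))) * ((k : ℝ) * ((k : ℝ) - 1)) = 1 := by
      have hk' : (2 : ℝ) ≤ k := by exact_mod_cast hk
      have : (k : ℝ) * (k - 1) ≠ 0 := by
        apply mul_ne_zero <;> linarith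
      exact one_div_mul_cancel this
    rw [this, map_one, one_mul]

theorem dP_hom (v : Fin n → ℝ) (P : MvPolynomial (Fin n) ℝ) (k : ℕ) (h : P.IsHomogeneous k) :
    (dP v P).IsHomogeneous (k - 1) := by
  unfold dP
  refine MvPolynomial.IsHomogeneous.sum _ _ _ fun i _ => ?_
  simpa using (MvPolynomial.isHomogeneous_C (Fin n) (v i)).mul (h.pderiv (i := i))

theorem dP_hom_zero (v : Fin n → ℝ) (P : MvPolynomial (Fin n) ℝ) (h : P.IsHomogeneous 0) :
    dP v P = 0 := by
  rw [← MvPolynomial.totalDegree_zero_iff_isHomogeneous,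
    MvPolynomial.totalDegree_eq_zero_iff_eq_C] at h
  rw [h, dP_C]

theorem int_mono (m : ℕ) : ∫ t in (0 : ℝ)..1, (1 - t) * t ^ m =
    1 / ((((m + 2 : ℕ) : ℝ)) * (((m + 2 : ℕ) : ℝ) - 1)) := by
  have e : (fun t : ℝ => (1 - t) * t ^ m) = fun t => t ^ m - t ^ (m + 1) := by
    funext t; ring
  rw [e, intervalIntegral.integral_sub (by simp) (by simp), integral_pow,
    integral_pow]
  push_cast
  have h1 : (m : ℝ) + 1 ≠ 0 := by positivity
  have h2 : (m : ℝ) + 1 + 1 ≠ 0 := by positivity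
  have h3 : (m : ℝ) + 2 ≠ 0 := by positivity
  have h4 : (m : ℝ) + 2 - 1 ≠ 0 := by
    have : (m : ℝ) + 2 - 1 = m + 1 := by ring
    rw [this]; exact h1
  simp
  field_simp
  ring

theorem hom_int (P : MvPolynomial (Fin n) ℝ) (k : ℕ) (h : P.IsHomogeneous k) (x v : Fin n → ℝ) :
    ∫ t in (0 : ℝ)..1, (1 - t) * MvPolynomial.eval (t • x) (dP v (dP v P)) =
      1 / ((k : ℝ) * ((k : ℝ) - 1)) * MvPolynomial.eval x (dP v (dP v P)) := by
  rcases Nat.lt_or_ge k 2 with hk | hk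
  · have : dP v (dP v P) = 0 := by
      apply dP_hom_zero
      have := dP_hom v P k h
      rwa [show k - 1 = 0 by omega] at this
    simp [this]
  · obtain ⟨m, rfl⟩ := Nat.exists_eq_add_of_le' hk
    have h2 := dP_hom v _ _ (dP_hom v P _ h)
    simp only [Nat.reduceSubDiff, Nat.add_sub_cancel] at h2
    have e : (fun t : ℝ => (1 - t) * MvPolynomial.eval (t • x) (dP v (dP v P))) =
        fun t => (1 - t) * t ^ m * MvPolynomial.eval x (dP v (dP v P)) := by
      funext t
      rw [eval_hom _ m h2]; ring
    rw [e, intervalIntegral.integral_mul_const, int_mono]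

theorem cont_aux (P : MvPolynomial (Fin n) ℝ) (x : Fin n → ℝ) :
    Continuous fun t : ℝ => (1 - t) * MvPolynomial.eval (t • x) P :=
  (continuous_const.sub continuous_id).mul
      ((MvPolynomial.continuous_eval P).comp (continuous_id.smul continuous_const))

theorem facA_int (P : MvPolynomial (Fin n) ℝ) (x v : Fin n → ℝ) :
    ∑ i, ∑ j, v i * v j * MvPolynomial.eval x (facA P i j) =
      ∫ t in (0 : ℝ)..1, (1 - t) * MvPolynomial.eval (t • x) (dP v (dP v P)) := by
  have e : ∀ y, MvPolynomial.eval y (dP v (dP v P)) =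
      ∑ k ∈ Finset.range (P.totalDegree + 1),
        MvPolynomial.eval y (dP v (dP v (MvPolynomial.homogeneousComponent k P))) := by
    intro y
    conv_lhs => rw [← MvPolynomial.sum_homogeneousComponent P]
    rw [dP_sum, dP_sum, map_sum]
  have e2 : (fun t : ℝ => (1 - t) * MvPolynomial.eval (t • x) (dP v (dP v P))) =
      fun t => ∑ k ∈ Finset.range (P.totalDegree + 1), (1 - t) *
        MvPolynomial.eval (t • x) (dP v (dP v (MvPolynomial.homogeneousComponent k P))) := by
    funext t
    rw [e, Finset.mul_sum]
  rw [e2, intervalIntegral.integral_finsetSum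
    (fun k _ => (cont_aux _ x).intervalIntegrable _ _)]
  rw [Finset.sum_congr rfl fun k _ =>
    hom_int _ k (MvPolynomial.homogeneousComponent_isHomogeneous k P) x v]
  simp only [dP_dP, facA, map_sum, map_mul, MvPolynomial.eval_C, Finset.mul_sum]
  conv_rhs => rw [Finset.sum_comm]
  refine Finset.sum_congr rfl fun i _ => ?_
  conv_rhs => rw [Finset.sum_comm]
  refine Finset.sum_congr rfl fun j _ => Finset.sum_congr rfl fun k _ => ?_
  ring

theorem facA_pos (P : MvPolynomial (Fin n) ℝ) (x v : Fin n → ℝ)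
    (hn : ∀ x, 0 ≤ MvPolynomial.eval x (dP v (dP v P)))
    (hp : 0 < MvPolynomial.eval 0 (dP v (dP v P))) :
    0 < ∑ i, ∑ j, v i * v j * MvPolynomial.eval x (facA P i j) := by
  rw [facA_int]
  refine intervalIntegral.integral_pos zero_lt_one (cont_aux _ x).continuousOn ?_
    ⟨0, by simp, by simpa using hp⟩
  intro t ht
  exact mul_nonneg (by linarith [ht.2]) (hn _)

end Fact


section Lagr

theorem lagrange {E ι : Type*} [AddCommGroup E] [Module ℝ E] [Fintype ι]
    (c : ι → E → ℝ) (f0 : E → ℝ) (hc : ∀ i, ConvexOn ℝ Set.univ (c i))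
    (hf : ConvexOn ℝ Set.univ f0) (xh : E) (hxh : ∀ i, c i xh < 0)
    (hmin : ∀ x, (∀ i, c i x ≤ 0) → 0 ≤ f0 x) :
    ∃ μ : ι → ℝ, (∀ i, 0 ≤ μ i) ∧ ∀ x, 0 ≤ f0 x + ∑ i, μ i * c i x := by
  classical
  let S : Set ((ι → ℝ) × ℝ) := {p | ∃ x, (∀ i, c i x < p.1 i) ∧ f0 x < p.2}
  have hopen : IsOpen S := by
    have : S = ⋃ x, ((⋂ i, {p : (ι → ℝ) × ℝ | c i x < p.1 i}) ∩ {p | f0 x < p.2}) := by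
      ext p; simp [S]
    rw [this]
    refine isOpen_iUnion fun x => IsOpen.inter (isOpen_iInter_of_finite fun i => ?_) ?_
    · exact isOpen_lt continuous_const ((continuous_apply i).comp continuous_fst)
    · exact isOpen_lt continuous_const continuous_snd
  have hconv : Convex ℝ S := by
    rintro p ⟨x, hx, hx'⟩ q ⟨y, hy, hy'⟩ a b ha hb hab
    have key : ∀ (g : E → ℝ), ConvexOn ℝ Set.univ g → ∀ s t : ℝ, g x < s → g y < t →
        g (a • x + b • y) < a * s + b * t := by
      intro g hg s t hs ht
      have := hg.2 (Set.mem_univ x) (Set.mem_univ y) ha hb hab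
      simp only [smul_eq_mul] at this
      rcases eq_or_lt_of_le ha with h0 | h0
      · subst h0
        have hb1 : b = 1 := by linarith
        subst hb1
        linarith
      · have h1 : a * g x < a * s := mul_lt_mul_of_pos_left hs h0
        have h2 : b * g y ≤ b * t := mul_le_mul_of_nonneg_left ht.le hb
        linarith
    refine ⟨a • x + b • y, fun i => ?_, ?_⟩
    · simpa using key (c i) (hc i) _ _ (hx i) (hy i)
    · simpa using key f0 hf _ _ hx' hy'
  have h0 : ((0, 0) : (ι → ℝ) × ℝ) ∉ S := by
    rintro ⟨x, hx, hx'⟩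
    have := hmin x fun i => (hx i).le
    simp at hx'
    linarith
  obtain ⟨L, hL⟩ := geometric_hahn_banach_point_open hconv hopen h0
  have hL0 : L ((0, 0) : (ι → ℝ) × ℝ) = 0 := L.map_zero
  let a : ι → ℝ := fun i => L (Pi.single i 1, 0)
  let b : ℝ := L (0, 1)
  have hform : ∀ (u : ι → ℝ) (r : ℝ), L (u, r) = ∑ i, a i * u i + b * r := by
    intro u r
    have e : ((u, r) : (ι → ℝ) × ℝ) = ∑ i, u i • ((Pi.single i 1, 0) : (ι → ℝ) × ℝ) +
        r • ((0, 1) : (ι → ℝ) × ℝ) := by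
      ext j
      · simp [Prod.fst_sum, Finset.sum_apply, Pi.single_apply]
      · simp [Prod.snd_sum]
    rw [e, map_add, map_sum, map_smul]
    simp only [map_smul, smul_eq_mul, a, b]
    congr 1
    · exact Finset.sum_congr rfl fun i _ => mul_comm _ _
    · ring
  have hpos : ∀ (u : ι → ℝ) (r : ℝ), (∃ x, (∀ i, c i x < u i) ∧ f0 x < r) →
      0 < ∑ i, a i * u i + b * r := by
    intro u r h
    have := hL (u, r) h
    rwa [hL0, hform] at this
  -- scaling argument
  have scal : ∀ s d : ℝ, (∀ t : ℝ, 0 ≤ t → 0 < s + t * d) → 0 ≤ d := by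
    intro s d h
    by_contra hd
    push Not at hd
    have hs : 0 < s := by simpa using h 0 le_rfl
    have := h (s / (-d)) (by apply div_nonneg hs.le; linarith)
    have e : s / (-d) * d = -s := by
      rw [div_neg, neg_mul, div_mul_cancel₀ _ hd.ne]
    linarith
  have ha : ∀ i, 0 ≤ a i := by
    intro i
    apply scal (∑ j, a j * (c j xh + 1) + b * (f0 xh + 1))
    intro t ht
    have := hpos (fun j => c j xh + 1 + t * (if j = i then 1 else 0)) (f0 xh + 1)
      ⟨xh, fun j => by split_ifs <;> linarith, by linarith⟩
    simp only [mul_add, Finset.sum_add_distrib, mul_ite, mul_one, mul_zero, Finset.sum_ite_eq',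
      Finset.mem_univ, if_true] at this ⊢
    linarith
  have hb : 0 ≤ b := by
    apply scal (∑ j, a j * (c j xh + 1) + b * (f0 xh + 1))
    intro t ht
    have := hpos (fun j => c j xh + 1) (f0 xh + 1 + t)
      ⟨xh, fun j => by linarith, by linarith⟩
    linarith
  have hb' : 0 < b := by
    rcases eq_or_lt_of_le hb with h | h
    · exfalso
      have := hpos (fun j => c j xh / 2) (f0 xh + 1)
        ⟨xh, fun j => by linarith [hxh j], by linarith⟩
      rw [← h] at this
      have h2 : ∑ i, a i * (c i xh / 2) ≤ 0 := Finset.sum_nonpos fun i _ =>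
        mul_nonpos_of_nonneg_of_nonpos (ha i) (by linarith [hxh i])
      linarith
    · exact h
  refine ⟨fun i => a i / b, fun i => div_nonneg (ha i) hb, fun x => ?_⟩
  have h1 : 0 ≤ ∑ i, a i * c i x + b * f0 x := by
    by_contra hneg
    push Not at hneg
    set s := ∑ i, a i * c i x + b * f0 x with hs
    set d := ∑ i, a i + b with hd
    have hd0 : 0 < d := by
      have : 0 ≤ ∑ i, a i := Finset.sum_nonneg fun i _ => ha i
      linarith
    have hε : 0 < -s / d := div_pos (by linarith) hd0
    have := hpos (fun i => c i x + -s / d) (f0 x + -s / d)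
      ⟨x, fun i => by linarith, by linarith⟩
    have e : ∑ i, a i * (c i x + -s / d) + b * (f0 x + -s / d) = s + d * (-s / d) := by
      simp only [mul_add, Finset.sum_add_distrib, ← Finset.sum_mul]
      rw [hs, hd]; ring
    rw [e, mul_div_cancel₀ _ hd0.ne'] at this
    linarith
  have e : f0 x + ∑ i, a i / b * c i x = (∑ i, a i * c i x + b * f0 x) / b := by
    rw [add_div, mul_div_cancel_left₀ _ hb'.ne', Finset.sum_div, add_comm]
    congr 1
    exact Finset.sum_congr rfl fun i _ => by ring
  rw [e]
  exact div_nonneg h1 hb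

end Lagr

section Trans

variable {n : ℕ}

/-- Translation of a polynomial. -/
noncomputable def tr (a : Fin n → ℝ) : MvPolynomial (Fin n) ℝ →ₐ[ℝ] MvPolynomial (Fin n) ℝ :=
  MvPolynomial.aeval fun i => MvPolynomial.X i + MvPolynomial.C (a i)

theorem tr_eval (a x : Fin n → ℝ) (P : MvPolynomial (Fin n) ℝ) :
    MvPolynomial.eval x (tr a P) = MvPolynomial.eval (x + a) P := by
  induction P using MvPolynomial.induction_on with
  | C r => simp [tr]
  | add p q hp hq => simp [hp, hq]
  | mul_X p i hp => simp [hp]; simp [tr]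

theorem tr_tr (a : Fin n → ℝ) (P : MvPolynomial (Fin n) ℝ) : tr (-a) (tr a P) = P := by
  apply MvPolynomial.funext
  intro x
  simp [tr_eval]

theorem tr_dP (a v : Fin n → ℝ) (P : MvPolynomial (Fin n) ℝ) : dP v (tr a P) = tr a (dP v P) := by
  apply MvPolynomial.funext
  intro x
  have h1 := hasDerivAt_line (tr a P) x v 0
  have h2 := hasDerivAt_line P (x + a) v 0
  have e : (fun t : ℝ => MvPolynomial.eval (x + t • v) (tr a P)) =
      fun t => MvPolynomial.eval (x + a + t • v) P := by
    funext t
    rw [tr_eval, add_right_comm]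
  rw [e] at h1
  have := h1.unique h2
  simpa [tr_eval] using this

theorem tr_convex (a : Fin n → ℝ) (P : MvPolynomial (Fin n) ℝ)
    (h : ConvexOn ℝ Set.univ (fun x => MvPolynomial.eval x P)) :
    ConvexOn ℝ Set.univ (fun x => MvPolynomial.eval x (tr a P)) := by
  have := h.translate_left a
  simpa [tr_eval, Function.comp_def] using this

theorem sumSq_map {A B : Type} [CommRing A] [CommRing B] (f : A →+* B) {s : A} (h : IsSumSq s) :
    IsSumSq (f s) := by
  induction h with
  | zero => simp
  | sq_add a hs ih => rw [map_add, map_mul]; exact IsSumSq.sq_add _ ih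

/-- The main certificate. -/
theorem main_cert (xb : Fin n → ℝ) (φ Λ : MvPolynomial (Fin n) ℝ)
    (hφ : ConvexOn ℝ Set.univ (fun x => MvPolynomial.eval x φ))
    (hΛ : ConvexOn ℝ Set.univ (fun x => MvPolynomial.eval x Λ))
    (hΛ0 : MvPolynomial.eval xb Λ = 0) (hΛn : ∀ x, 0 ≤ MvPolynomial.eval x Λ)
    (hφp : ∀ v : Fin n → ℝ, v ≠ 0 → 0 < MvPolynomial.eval xb (dP v (dP v φ)))
    (hΛp : ∀ v : Fin n → ℝ, v ≠ 0 → 0 < MvPolynomial.eval xb (dP v (dP v Λ))) :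
    ∃ σ σ₀ : MvPolynomial (Fin n) ℝ, IsSumSq σ ∧ IsSumSq σ₀ ∧ Λ + σ * φ = σ₀ := by
  have hdeg : ∀ v : Fin n → ℝ, v ≠ 0 → 2 ≤ (lineP (tr xb φ) v).natDegree := by
    intro v hv
    apply lineP_deg
    rw [tr_dP, tr_dP, tr_eval, zero_add]
    exact hφp v hv
  have hcr : ∀ i, MvPolynomial.eval 0 (MvPolynomial.pderiv i (tr xb Λ)) = 0 := by
    intro i
    have h1 : dP (Pi.single i 1) (tr xb Λ) = MvPolynomial.pderiv i (tr xb Λ) := by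
      unfold dP
      rw [Finset.sum_eq_single i]
      · simp
      · intro j _ hj; rw [Pi.single_eq_of_ne hj]; simp
      · simp
    rw [← h1]
    apply crit_zero
    intro y
    rw [tr_eval, tr_eval, zero_add, hΛ0]
    exact hΛn _
  obtain ⟨σ, σ₀, h1, h2, h3⟩ := core (tr xb φ) (tr_convex xb φ hφ) hdeg (facA (tr xb Λ))
    (facA_symm _) (fun x _ v hv => facA_pos _ x v
      (fun y => hess_nonneg _ (tr_convex xb Λ hΛ) y v) (by
        rw [tr_dP, tr_dP, tr_eval, zero_add]
        exact hΛp v hv))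
  rw [facA_eq _ (by rw [tr_eval, zero_add, hΛ0]) hcr] at h3
  refine ⟨tr (-xb) σ, tr (-xb) σ₀, sumSq_map (tr (-xb)).toRingHom h1,
    sumSq_map (tr (-xb)).toRingHom h2, ?_⟩
  have := congrArg (tr (-xb)) h3
  rwa [map_add, map_mul, tr_tr, tr_tr] at this

end Trans


theorem isSOS_of_isSumSq {n : ℕ} {s : MvPolynomial (Fin n) ℝ} (h : IsSumSq s) : IsSOS s := by
  induction h with
  | zero => exact ⟨0, Fin.elim0, by simp⟩
  | @sq_add a s hs ih =>
    obtain ⟨r, u, rfl⟩ := ih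
    exact ⟨r + 1, Fin.cons a u, by simp [Fin.sum_univ_succ, sq]⟩

theorem convexOn_wsum {E α : Type*} [AddCommGroup E] [Module ℝ E] (s : Finset α) (w : α → ℝ)
    (c : α → E → ℝ) (hw : ∀ i, 0 ≤ w i) (hc : ∀ i, ConvexOn ℝ Set.univ (c i)) :
    ConvexOn ℝ Set.univ (fun x => ∑ i ∈ s, w i * c i x) := by
  classical
  induction s using Finset.induction_on with
  | empty => simpa using convexOn_const (0 : ℝ) convex_univ
  | insert a s ha ih =>
    simp only [Finset.sum_insert ha]
    exact ((hc a).smul (hw a)).add ih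

theorem stmt_10 {n m p : ℕ} (F : Fin p → MvPolynomial (Fin n) ℝ)
    (G : Fin m → MvPolynomial (Fin n) ℝ)
    (f : Fin p → (Fin n → ℝ) → ℝ) (hf : ∀ j, f j = fun x => MvPolynomial.eval x (F j))
    (g : Fin m → (Fin n → ℝ) → ℝ) (hg : ∀ i, g i = fun x => MvPolynomial.eval x (G i))
    (hconvf : ∀ j, ConvexOn ℝ Set.univ (f j)) (hconvg : ∀ i, ConvexOn ℝ Set.univ (g i))
    (lam : Fin p → ℝ) (hlam : ∀ j, 0 < lam j)
    (z₀ : Fin n → ℝ) (hz₀ : ∀ i, g i z₀ ≤ 0)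
    -- (i) Slater condition
    (hSlater : ∃ xh : Fin n → ℝ, (∀ i, g i xh < 0) ∧ ∀ j, f j xh < f j z₀)
    -- x̄ minimizes λᵀf over K_{z₀}, with value f̄_{z₀}
    (xb : Fin n → ℝ) (fbar : ℝ)
    (hxb : (∀ i, g i xb ≤ 0) ∧ (∀ j, f j xb ≤ f j z₀))
    (hmin : ∀ x : Fin n → ℝ, (∀ i, g i x ≤ 0) → (∀ j, f j x ≤ f j z₀) →
      ∑ j, lam j * f j xb ≤ ∑ j, lam j * f j x)
    (hfbar : fbar = ∑ j, lam j * f j xb)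
    -- (ii) positive definiteness of the weighted Hessian at x̄
    (hPD : ∀ v : Fin n → ℝ, v ≠ 0 →
      0 < iteratedFDeriv ℝ 2 (fun x => ∑ j, lam j * f j x) xb ![v, v]) :
    ∃ (σ σ₀ : MvPolynomial (Fin n) ℝ) (μb : Fin m → ℝ) (νb : Fin p → ℝ),
      IsSOS σ ∧ IsSOS σ₀ ∧ (∀ i, 0 ≤ μb i) ∧ (∀ j, 0 ≤ νb j) ∧
      (∑ j, MvPolynomial.C (lam j) * F j) - MvPolynomial.C fbar =
        σ₀ - (∑ i, MvPolynomial.C (μb i) * G i)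
          - (∑ j, MvPolynomial.C (νb j) * (F j - MvPolynomial.C (f j z₀)))
          - σ * ((∑ j, MvPolynomial.C (lam j) * F j)
              - MvPolynomial.C (∑ j, lam j * f j z₀)) := by
  obtain ⟨xh, hxh1, hxh2⟩ := hSlater
  have hF : ConvexOn ℝ Set.univ (fun x => ∑ j, lam j * f j x) :=
    convexOn_wsum Finset.univ lam f (fun j => (hlam j).le) hconvf
  obtain ⟨μ, hμ, hμL⟩ := lagrange
    (fun (k : Fin m ⊕ Fin p) (x : Fin n → ℝ) => Sum.elim (fun i => g i x) (fun j => f j x + -(f j z₀)) k)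
    (fun x => (∑ j, lam j * f j x) + -fbar)
    (by
      rintro (i | j)
      · exact hconvg i
      · exact (hconvf j).add_const _)
    (hF.add_const _) xh
    (by
      rintro (i | j)
      · exact hxh1 i
      · have := hxh2 j
        simp only [Sum.elim_inr]
        linarith)
    (by
      intro x hx
      have := hmin x (fun i => hx (Sum.inl i)) (fun j => by
        have := hx (Sum.inr j)
        simp only [Sum.elim_inr] at this
        linarith)
      rw [hfbar]
      linarith)
  simp only [Fintype.sum_sum_type, Sum.elim_inl, Sum.elim_inr] at hμL
  have ev : ∀ j x, MvPolynomial.eval x (F j) = f j x := fun j x => by rw [hf]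
  have evg : ∀ i x, MvPolynomial.eval x (G i) = g i x := fun i x => by rw [hg]
  set P : MvPolynomial (Fin n) ℝ := ∑ j, MvPolynomial.C (lam j) * F j with hP
  set R : MvPolynomial (Fin n) ℝ := (∑ i, MvPolynomial.C (μ (Sum.inl i)) * G i) +
    (∑ j, MvPolynomial.C (μ (Sum.inr j)) * (F j + MvPolynomial.C (-(f j z₀)))) +
      MvPolynomial.C (-fbar) with hR
  have evP : ∀ x, MvPolynomial.eval x P = ∑ j, lam j * f j x := by
    intro x; simp only [hP, map_sum, map_mul, MvPolynomial.eval_C, ev]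
  have evR : ∀ x, MvPolynomial.eval x R = (∑ i, μ (Sum.inl i) * g i x) +
      (∑ j, μ (Sum.inr j) * (f j x + -(f j z₀))) + -fbar := by
    intro x
    simp only [hR, map_add, map_sum, map_mul, MvPolynomial.eval_C, ev, evg]
  have hPc : ConvexOn ℝ Set.univ (fun x => MvPolynomial.eval x P) := by
    simp only [evP]; exact hF
  have hRc : ConvexOn ℝ Set.univ (fun x => MvPolynomial.eval x R) := by
    simp only [evR]
    exact ((convexOn_wsum _ _ g (fun i => hμ _) hconvg).add
      (convexOn_wsum _ _ (fun j x => f j x + -(f j z₀)) (fun j => hμ _)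
        (fun j => (hconvf j).add_const _))).add_const _
  have hPp : ∀ v : Fin n → ℝ, v ≠ 0 → 0 < MvPolynomial.eval xb (dP v (dP v P)) := by
    intro v hv
    rw [← iteratedFDeriv_eval]
    simp only [evP]
    exact hPD v hv
  have hΛn : ∀ x, 0 ≤ MvPolynomial.eval x (P + R) := by
    intro x
    have := hμL x
    rw [map_add, evP, evR]
    linarith
  have hΛ0 : MvPolynomial.eval xb (P + R) = 0 := by
    refine le_antisymm ?_ (hΛn xb)
    rw [map_add, evP, evR, hfbar]
    have h1 : ∑ i, μ (Sum.inl i) * g i xb ≤ 0 := Finset.sum_nonpos fun i _ =>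
      mul_nonpos_of_nonneg_of_nonpos (hμ _) (hxb.1 i)
    have h2 : ∑ j, μ (Sum.inr j) * (f j xb + -(f j z₀)) ≤ 0 := Finset.sum_nonpos fun j _ =>
      mul_nonpos_of_nonneg_of_nonpos (hμ _) (by linarith [hxb.2 j])
    linarith
  obtain ⟨σ, σ₀, h1, h2, h3⟩ := main_cert xb
    (P + MvPolynomial.C (-(∑ j, lam j * f j z₀))) (P + R)
    (by
      simp only [map_add, MvPolynomial.eval_C]
      exact hPc.add_const _)
    (by
      simp only [map_add]
      exact hPc.add hRc)
    hΛ0 hΛn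
    (by
      intro v hv
      simpa only [dP_add, dP_C, add_zero] using hPp v hv)
    (by
      intro v hv
      rw [dP_add, dP_add, map_add]
      have := hess_nonneg R hRc xb v
      linarith [hPp v hv])
  refine ⟨σ, σ₀, fun i => μ (Sum.inl i), fun j => μ (Sum.inr j), isSOS_of_isSumSq h1,
    isSOS_of_isSumSq h2, fun i => hμ _, fun j => hμ _, ?_⟩
  rw [← h3, hR]
  simp only [map_neg, sub_eq_add_neg]
  ring
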